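/- arXiv:1601.04308 — 2 statements merged into one kernel-verified Lean document; each statement's English description precedes it below -/
import Mathlib

section
/- Key boundary-rectification estimate. Let Ω ⊂ ℝ^N be an open set of class W^{2,∞}, let j satisfy (J0) and (J1), let σ ∈ (0,1), fix ŝ ∈ ∂Ω with r = r(ŝ) the radius from the W^{2,∞} boundary chart, and fix 0 < δ₀ < r C_j⁻¹/2. For s in the closure of Ω set J_s = {z ∈ ℝ^N : s + j(s,z) ∈ cl(Ω)}. Then there exists a constant C > 0 such that for all s₁, s₂ ∈ B_{r/2}(ŝ) ∩ cl(Ω) with d(s₁) = d(s₂), one has ∫_{(J_{s₁} \ J_{s₂}) ∩ {|z| ≤ δ₀}} |z|^{−(N+σ−1)} dz ≤ C|s₁ − s₂|. -/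
set_option autoImplicit false

/- Common framework for censored nonlocal Hamilton–Jacobi equations with
Neumann boundary conditions (Barles-type viscosity solutions). -/

open Set Metric MeasureTheory Filter Topology Function
open scoped RealInnerProductSpace NNReal ENNReal

noncomputable section

namespace Censored

abbrev Euc (N : ℕ) : Type := EuclideanSpace ℝ (Fin N)

variable {N : ℕ}

/-- Signed distance to the boundary of `Ω`, positive inside `Ω`. -/
def sdist (Ω : Set (Euc N)) (x : Euc N) : ℝ := infDist x Ωᶜ - infDist x Ω

/-- A modulus of continuity. -/
def IsModulus (ω : ℝ → ℝ) : Prop :=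
  (∀ s, 0 ≤ ω s) ∧ Monotone ω ∧ Tendsto ω (nhdsWithin 0 (Ioi 0)) (nhds 0)

/-- A `W^{2,∞}` boundary chart for `Ω` at `s`, with radius `r`: a diffeomorphism of
class `W^{2,∞}` (i.e. `C^1` with Lipschitz differential, with inverse of the same
regularity) whose `N`-th component coincides with the signed distance. -/
def IsW2Chart (hN : 0 < N) (Ω : Set (Euc N)) (s : Euc N) (r : ℝ)
    (ψ ψinv : Euc N → Euc N) : Prop :=
  0 < r ∧
  ContDiffOn ℝ 1 ψ (ball s r) ∧
  (∃ L : ℝ≥0, LipschitzOnWith L (fun x => fderiv ℝ ψ x) (ball s r)) ∧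
  ContDiffOn ℝ 1 ψinv (ψ '' ball s r) ∧
  (∃ L : ℝ≥0, LipschitzOnWith L (fun x => fderiv ℝ ψinv x) (ψ '' ball s r)) ∧
  (∀ x ∈ ball s r, ψinv (ψ x) = x) ∧
  (∀ x ∈ ball s r, ψ x ⟨N - 1, Nat.sub_lt hN Nat.one_pos⟩ = sdist Ω x)

/-- Assumption (O): `Ω` is open of class `W^{2,∞}`. -/
def IsW2Domain (hN : 0 < N) (Ω : Set (Euc N)) : Prop :=
  IsOpen Ω ∧ ∀ s ∈ frontier Ω, ∃ r ψ ψinv, IsW2Chart hN Ω s r ψ ψinv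

/-- `n` is the exterior unit normal vector field to `∂Ω`:  `n = -D d` where `d` is the
signed distance (positive inside). -/
def IsExteriorNormal (Ω : Set (Euc N)) (n : Euc N → Euc N) : Prop :=
  ∀ x ∈ frontier Ω, ‖n x‖ = 1 ∧ HasGradientAt (sdist Ω) (-(n x)) x

/-- First part of assumption (M): the measures `μ_x` have a (measurable, nonnegative)
density `g x` with respect to Lebesgue measure, bounded by `Cμ |z|^{-(N+σ)}`. -/
def AssumptionM1 (Ω : Set (Euc N)) (g : Euc N → Euc N → ℝ) (Cμ σ : ℝ) : Prop :=
  0 < Cμ ∧ σ ∈ Ioo (0:ℝ) 1 ∧ (∀ x, Measurable (g x)) ∧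
  (∀ x ∈ closure Ω, ∀ z : Euc N, 0 ≤ g x z) ∧
  (∀ x ∈ closure Ω, ∀ z : Euc N, g x z ≤ Cμ * ‖z‖ ^ (-((N : ℝ) + σ)))

/-- Assumption (M). -/
def AssumptionM (Ω : Set (Euc N)) (g : Euc N → Euc N → ℝ) (Cμ Dμ σ : ℝ) : Prop :=
  AssumptionM1 Ω g Cμ σ ∧ 0 < Dμ ∧
  (∀ x ∈ closure Ω, ∀ y ∈ closure Ω, ∀ z : Euc N,
    |g x z - g y z| ≤ Dμ * ‖x - y‖ * ‖z‖ ^ (-((N : ℝ) + σ)))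

/-- Assumption (J0). -/
def AssumptionJ0 (Ω : Set (Euc N)) (j : Euc N → Euc N → Euc N) (Aj : ℝ) : Prop :=
  ∀ x ∈ closure Ω,
    ContDiff ℝ 1 (j x) ∧ Function.Bijective (j x) ∧
    ContDiff ℝ 1 (Function.invFun (j x)) ∧
    ∀ z : Euc N, ‖fderiv ℝ (Function.invFun (j x)) z‖ ≤ Aj

/-- Assumption (J1). -/
def AssumptionJ1 (Ω : Set (Euc N)) (j : Euc N → Euc N → Euc N) (Cj' Cj Dj : ℝ) : Prop :=
  0 < Cj' ∧ 0 < Cj ∧ 0 < Dj ∧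
  (∀ x ∈ closure Ω, ∀ z : Euc N, Cj' * ‖z‖ ≤ ‖j x z‖ ∧ ‖j x z‖ ≤ Cj * ‖z‖) ∧
  (∀ x ∈ closure Ω, ∀ y ∈ closure Ω, ∀ z : Euc N, ‖j x z - j y z‖ ≤ Dj * ‖z‖ * ‖x - y‖)

/-- The truncated censored nonlocal term over `{|z| ≥ ξ}` (`I^ξ`). -/
def Iout (Ω : Set (Euc N)) (j : Euc N → Euc N → Euc N) (g : Euc N → Euc N → ℝ)
    (ξ : ℝ) (u : Euc N → ℝ) (x : Euc N) : ℝ :=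
  ∫ z in {z : Euc N | ξ ≤ ‖z‖ ∧ x + j x z ∈ closure Ω}, (u (x + j x z) - u x) * g x z

/-- The truncated censored nonlocal term over `{|z| < ξ}` (`I_ξ`). -/
def Iin (Ω : Set (Euc N)) (j : Euc N → Euc N → Euc N) (g : Euc N → Euc N → ℝ)
    (ξ : ℝ) (φ : Euc N → ℝ) (x : Euc N) : ℝ :=
  ∫ z in {z : Euc N | ‖z‖ < ξ ∧ x + j x z ∈ closure Ω}, (φ (x + j x z) - φ x) * g x z

/-- The censored nonlocal operator of order `σ < 1`, as a principal value. -/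
def Ipv (Ω : Set (Euc N)) (j : Euc N → Euc N → Euc N) (g : Euc N → Euc N → ℝ)
    (u : Euc N → ℝ) (x : Euc N) : ℝ :=
  limUnder (nhdsWithin (0:ℝ) (Ioi 0)) (fun δ =>
    ∫ z in {z : Euc N | δ < ‖z‖ ∧ x + j x z ∈ closure Ω}, (u (x + j x z) - u x) * g x z)

/-- `u` is bounded on `S`. -/
def BddOn (u : Euc N → ℝ) (S : Set (Euc N)) : Prop := ∃ M, ∀ x ∈ S, |u x| ≤ M

/-- `u = u(x,t)` is bounded on `S × I`. -/
def BddOnT (u : Euc N → ℝ → ℝ) (S : Set (Euc N)) (I : Set ℝ) : Prop :=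
  ∃ M, ∀ x ∈ S, ∀ t ∈ I, |u x t| ≤ M

/-- Viscosity subsolution, with generalized Neumann boundary conditions, of the
stationary equation `F(x, u, Du, I[u]) = 0` in `Ω`, `∂u/∂n = 0` on `∂Ω`,
for the censored operator determined by `j, g` (with constant `Cj` from (J1)). -/
def IsSubSol (Ω : Set (Euc N)) (j : Euc N → Euc N → Euc N) (g : Euc N → Euc N → ℝ)
    (n : Euc N → Euc N) (Cj : ℝ) (F : Euc N → ℝ → Euc N → ℝ → ℝ) (u : Euc N → ℝ) : Prop :=
  ∀ ξ > (0:ℝ), ∀ φ : Euc N → ℝ, ContDiff ℝ 1 φ →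
    ∀ x ∈ closure Ω,
      (∀ y ∈ closedBall x (Cj * ξ) ∩ closure Ω, u y - φ y ≤ u x - φ x) →
      (x ∈ Ω → F x (u x) (gradient φ x) (Iin Ω j g ξ φ x + Iout Ω j g ξ u x) ≤ 0) ∧
      (x ∈ frontier Ω →
        min (F x (u x) (gradient φ x) (Iin Ω j g ξ φ x + Iout Ω j g ξ u x))
          ⟪gradient φ x, n x⟫ ≤ 0)

/-- Viscosity supersolution, with generalized Neumann boundary conditions. -/
def IsSuperSol (Ω : Set (Euc N)) (j : Euc N → Euc N → Euc N) (g : Euc N → Euc N → ℝ)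
    (n : Euc N → Euc N) (Cj : ℝ) (F : Euc N → ℝ → Euc N → ℝ → ℝ) (v : Euc N → ℝ) : Prop :=
  ∀ ξ > (0:ℝ), ∀ φ : Euc N → ℝ, ContDiff ℝ 1 φ →
    ∀ x ∈ closure Ω,
      (∀ y ∈ closedBall x (Cj * ξ) ∩ closure Ω, v x - φ x ≤ v y - φ y) →
      (x ∈ Ω → 0 ≤ F x (v x) (gradient φ x) (Iin Ω j g ξ φ x + Iout Ω j g ξ v x)) ∧
      (x ∈ frontier Ω →
        0 ≤ max (F x (v x) (gradient φ x) (Iin Ω j g ξ φ x + Iout Ω j g ξ v x))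
          ⟪gradient φ x, n x⟫)

/-- `F` corresponding to the stationary equation `u - I[u] + H(x,Du) = 0`. -/
def statF (H : Euc N → Euc N → ℝ) : Euc N → ℝ → Euc N → ℝ → ℝ :=
  fun x r p I => r - I + H x p

/-- `F` corresponding to the ergodic equation `λ - I[w] - H(x,Dw) = 0`. -/
def ergF (H : Euc N → Euc N → ℝ) (lam : ℝ) : Euc N → ℝ → Euc N → ℝ → ℝ :=
  fun x _ p I => lam - I - H x p

/-- Parabolic viscosity subsolution with generalized Neumann boundary conditions,
for `F(x, t, ∂_t u, u, Du, I[u(·,t)]) = 0` in `Ω × (0,∞)`. -/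
def IsParSubSol (Ω : Set (Euc N)) (j : Euc N → Euc N → Euc N) (g : Euc N → Euc N → ℝ)
    (n : Euc N → Euc N) (Cj : ℝ) (F : Euc N → ℝ → ℝ → ℝ → Euc N → ℝ → ℝ)
    (u : Euc N → ℝ → ℝ) : Prop :=
  ∀ ξ > (0:ℝ), ∀ φ : Euc N → ℝ → ℝ,
    ContDiff ℝ 1 (fun q : Euc N × ℝ => φ q.1 q.2) →
    ∀ x ∈ closure Ω, ∀ t ∈ Ioi (0:ℝ),
      (∀ y ∈ closedBall x (Cj * ξ) ∩ closure Ω, ∀ s ∈ Ioi (0:ℝ), |s - t| ≤ ξ →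
        u y s - φ y s ≤ u x t - φ x t) →
      (x ∈ Ω →
        F x t (deriv (φ x) t) (u x t) (gradient (fun y => φ y t) x)
          (Iin Ω j g ξ (fun y => φ y t) x + Iout Ω j g ξ (fun y => u y t) x) ≤ 0) ∧
      (x ∈ frontier Ω →
        min (F x t (deriv (φ x) t) (u x t) (gradient (fun y => φ y t) x)
              (Iin Ω j g ξ (fun y => φ y t) x + Iout Ω j g ξ (fun y => u y t) x))
          ⟪gradient (fun y => φ y t) x, n x⟫ ≤ 0)

/-- Parabolic viscosity supersolution with generalized Neumann boundary conditions. -/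
def IsParSuperSol (Ω : Set (Euc N)) (j : Euc N → Euc N → Euc N) (g : Euc N → Euc N → ℝ)
    (n : Euc N → Euc N) (Cj : ℝ) (F : Euc N → ℝ → ℝ → ℝ → Euc N → ℝ → ℝ)
    (v : Euc N → ℝ → ℝ) : Prop :=
  ∀ ξ > (0:ℝ), ∀ φ : Euc N → ℝ → ℝ,
    ContDiff ℝ 1 (fun q : Euc N × ℝ => φ q.1 q.2) →
    ∀ x ∈ closure Ω, ∀ t ∈ Ioi (0:ℝ),
      (∀ y ∈ closedBall x (Cj * ξ) ∩ closure Ω, ∀ s ∈ Ioi (0:ℝ), |s - t| ≤ ξ →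
        v x t - φ x t ≤ v y s - φ y s) →
      (x ∈ Ω →
        0 ≤ F x t (deriv (φ x) t) (v x t) (gradient (fun y => φ y t) x)
          (Iin Ω j g ξ (fun y => φ y t) x + Iout Ω j g ξ (fun y => v y t) x)) ∧
      (x ∈ frontier Ω →
        0 ≤ max (F x t (deriv (φ x) t) (v x t) (gradient (fun y => φ y t) x)
              (Iin Ω j g ξ (fun y => φ y t) x + Iout Ω j g ξ (fun y => v y t) x))
          ⟪gradient (fun y => φ y t) x, n x⟫)

/-- `F` for the parabolic equation `∂_t u - I[u] + H(x,t,u,Du) = 0`. -/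
def parF (H : Euc N → ℝ → ℝ → Euc N → ℝ) : Euc N → ℝ → ℝ → ℝ → Euc N → ℝ → ℝ :=
  fun x t pt r p I => pt - I + H x t r p

/-! ### Hamiltonians: Bellman form and coercive form (stationary) -/




/-- `H` is of Bellman type with drift `b` and cost `l` over the control set `A`. -/
def IsBellman {A : Type} (b : Euc N → A → Euc N) (l : Euc N → A → ℝ)
    (H : Euc N → Euc N → ℝ) : Prop :=
  ∀ x p, H x p = ⨆ α : A, (-⟪b x α, p⟫ - l x α)

/-- Continuity and boundedness of the Bellman data `b, l`. -/
def BellmanData {A : Type} [TopologicalSpace A]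
    (b : Euc N → A → Euc N) (l : Euc N → A → ℝ) : Prop :=
  Continuous (fun q : Euc N × A => b q.1 q.2) ∧ (∃ M, ∀ x α, ‖b x α‖ ≤ M) ∧
  Continuous (fun q : Euc N × A => l q.1 q.2) ∧ (∃ M, ∀ x α, |l x α| ≤ M)

/-- Assumption (C): uniform continuity of the cost `l`. -/
def AssumptionC (Ω : Set (Euc N)) {A : Type} (l : Euc N → A → ℝ) : Prop :=
  ∃ ω, IsModulus ω ∧ ∀ (α : A), ∀ x ∈ closure Ω, ∀ y ∈ closure Ω,
    |l x α - l y α| ≤ ω ‖x - y‖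

/-- Assumption (L): uniform Lipschitz continuity of the drift `b`. -/
def AssumptionL (Ω : Set (Euc N)) {A : Type} (b : Euc N → A → Euc N) : Prop :=
  ∃ C > (0:ℝ), ∀ (α : A), ∀ x ∈ closure Ω, ∀ y ∈ closure Ω,
    ‖b x α - b y α‖ ≤ C * ‖x - y‖

/-- The part of the boundary where the drift points inwards for every control. -/
def GammaIn (Ω : Set (Euc N)) (n : Euc N → Euc N) {A : Type}
    (b : Euc N → A → Euc N) : Set (Euc N) :=
  {x | x ∈ frontier Ω ∧ ∀ α : A, ⟪b x α, n x⟫ < 0}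

/-- The part of the boundary where the drift points outwards for every control. -/
def GammaOut (Ω : Set (Euc N)) (n : Euc N → Euc N) {A : Type}
    (b : Euc N → A → Euc N) : Set (Euc N) :=
  {x | x ∈ frontier Ω ∧ ∀ α : A, 0 < ⟪b x α, n x⟫}

/-- The part of the boundary where the drift points both inwards and outwards. -/
def GammaMix (Ω : Set (Euc N)) (n : Euc N → Euc N) {A : Type}
    (b : Euc N → A → Euc N) : Set (Euc N) :=
  {x | x ∈ frontier Ω ∧ ∃ α₁ α₂ : A, ⟪b x α₁, n x⟫ < 0 ∧ 0 < ⟪b x α₂, n x⟫}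

/-- `S` is a union of connected components of `T`. -/
def IsUnionOfComponents (S T : Set (Euc N)) : Prop :=
  S ⊆ T ∧ ∀ x ∈ S, connectedComponentIn T x ⊆ S

/-- Assumption (B). -/
def AssumptionB (Ω : Set (Euc N)) (n : Euc N → Euc N) {A : Type}
    (b : Euc N → A → Euc N) : Prop :=
  GammaIn Ω n b ∪ GammaOut Ω n b ∪ GammaMix Ω n b = frontier Ω ∧
  IsUnionOfComponents (GammaIn Ω n b) (frontier Ω) ∧
  IsUnionOfComponents (GammaOut Ω n b) (frontier Ω) ∧
  IsUnionOfComponents (GammaMix Ω n b) (frontier Ω)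

/-- All the structural assumptions on a Bellman Hamiltonian: (C), (L), (B) together
with continuity and boundedness of the data. -/
def StatBellmanOK (Ω : Set (Euc N)) (n : Euc N → Euc N) {A : Type} [TopologicalSpace A]
    (b : Euc N → A → Euc N) (l : Euc N → A → ℝ) (H : Euc N → Euc N → ℝ) : Prop :=
  BellmanData b l ∧ IsBellman b l H ∧ AssumptionC Ω l ∧ AssumptionL Ω b ∧ AssumptionB Ω n b

/-- Assumption (H1): superfractional coercivity of order `m > σ`. -/
def AssumptionH1 (Ω : Set (Euc N)) (H : Euc N → Euc N → ℝ) (σ m c₀ D : ℝ) : Prop :=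
  σ < m ∧ 0 < c₀ ∧ 0 < D ∧ ∀ x ∈ closure Ω, ∀ p : Euc N, c₀ * ‖p‖ ^ m - D ≤ H x p

/-- Assumption (Ha) (sublinear case) with constant `C` and modulus `ω₁`. -/
def AssumptionHa (H : Euc N → Euc N → ℝ) (C : ℝ) (ω₁ : ℝ → ℝ) : Prop :=
  0 < C ∧ IsModulus ω₁ ∧
  ∀ x y p q : Euc N, H y p - H x q ≤ ω₁ ‖x - y‖ * (1 + ‖p‖) + C * ‖p - q‖

/-- Assumption (Hb) (superlinear case) with constants `m, A, Cb`. -/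
def AssumptionHb (H : Euc N → Euc N → ℝ) (m A Cb : ℝ) : Prop :=
  1 < m ∧ 0 < A ∧ 0 < Cb ∧
  ∀ μ ∈ Ioo (0:ℝ) 1, ∀ x p : Euc N,
    H x p - μ * H x (μ⁻¹ • p) ≤ (1 - μ) * (Cb * (1 - m) * ‖p‖ ^ m + A)

/-- Assumption (Hc) with constant `C` and modulus `ω₁`. -/
def AssumptionHc (H : Euc N → Euc N → ℝ) (m C : ℝ) (ω₁ : ℝ → ℝ) : Prop :=
  0 < C ∧ IsModulus ω₁ ∧
  ∀ x y p q : Euc N,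
    H y p - H x q ≤ ω₁ ‖x - y‖ * (1 + (max ‖p‖ ‖q‖) ^ m)
      + C * ‖p - q‖ * (max ‖p‖ ‖q‖) ^ (m - 1)

/-- The structural assumptions on a coercive Hamiltonian:
(H1), (Ha) (sublinear) or (H1), (Hb), (Hc) (superlinear). -/
def StatCoerciveOK (Ω : Set (Euc N)) (H : Euc N → Euc N → ℝ) (σ : ℝ) : Prop :=
  ∃ m c₀ D, AssumptionH1 Ω H σ m c₀ D ∧
    ((m ≤ 1 ∧ ∃ C ω₁, AssumptionHa H C ω₁) ∨
     (∃ A Cb, AssumptionHb H m A Cb ∧ ∃ C ω₁, AssumptionHc H m C ω₁))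

/-- Assumption (E). -/
def AssumptionE (Ω : Set (Euc N)) (H : Euc N → Euc N → ℝ) : Prop :=
  ∀ R > (0:ℝ), ∃ HR : ℝ, ∀ x ∈ closure Ω, ∀ p : Euc N, ‖p‖ ≤ R → |H x p| ≤ HR

/-! ### Parabolic Hamiltonians and assumptions -/

/-- `H(x,t,r,p)` is of (time-dependent) Bellman type. -/
def IsParBellman {A : Type} (lam : Euc N → ℝ → A → ℝ) (b : Euc N → ℝ → A → Euc N)
    (l : Euc N → ℝ → A → ℝ) (H : Euc N → ℝ → ℝ → Euc N → ℝ) : Prop :=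
  ∀ x t r p, H x t r p = ⨆ α : A, (lam x t α * r - ⟪b x t α, p⟫ - l x t α)

/-- Continuity and boundedness of the parabolic Bellman data. -/
def ParBellmanData {A : Type} [TopologicalSpace A] (lam : Euc N → ℝ → A → ℝ)
    (b : Euc N → ℝ → A → Euc N) (l : Euc N → ℝ → A → ℝ) : Prop :=
  Continuous (fun q : Euc N × ℝ × A => lam q.1 q.2.1 q.2.2) ∧
  (∃ M, ∀ x t α, |lam x t α| ≤ M) ∧
  Continuous (fun q : Euc N × ℝ × A => b q.1 q.2.1 q.2.2) ∧
  (∃ M, ∀ x t α, ‖b x t α‖ ≤ M) ∧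
  Continuous (fun q : Euc N × ℝ × A => l q.1 q.2.1 q.2.2) ∧
  (∃ M, ∀ x t α, |l x t α| ≤ M)

/-- Assumption (C'): uniform continuity of `l` and `λ` in `(x,t)`, uniformly in `α`. -/
def AssumptionC' (Ω : Set (Euc N)) {A : Type} (lam l : Euc N → ℝ → A → ℝ) : Prop :=
  (∃ ω, IsModulus ω ∧ ∀ (α : A), ∀ x ∈ closure Ω, ∀ y ∈ closure Ω,
      ∀ t ∈ Ici (0:ℝ), ∀ s ∈ Ici (0:ℝ), |l x t α - l y s α| ≤ ω (‖x - y‖ + |t - s|)) ∧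
  (∃ ω, IsModulus ω ∧ ∀ (α : A), ∀ x ∈ closure Ω, ∀ y ∈ closure Ω,
      ∀ t ∈ Ici (0:ℝ), ∀ s ∈ Ici (0:ℝ), |lam x t α - lam y s α| ≤ ω (‖x - y‖ + |t - s|))

/-- Assumption (L'): uniform Lipschitz continuity of the drift `b` in `(x,t)`. -/
def AssumptionL' (Ω : Set (Euc N)) {A : Type} (b : Euc N → ℝ → A → Euc N) : Prop :=
  ∃ C > (0:ℝ), ∀ (α : A), ∀ x ∈ closure Ω, ∀ y ∈ closure Ω, ∀ s ∈ Ici (0:ℝ), ∀ t ∈ Ici (0:ℝ),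
    ‖b x s α - b y t α‖ ≤ C * (‖x - y‖ + |s - t|)

/-- Inward part of the boundary for time-dependent drift. -/
def GammaInT (Ω : Set (Euc N)) (n : Euc N → Euc N) {A : Type}
    (b : Euc N → ℝ → A → Euc N) : Set (Euc N) :=
  {x | x ∈ frontier Ω ∧ ∀ t ∈ Ici (0:ℝ), ∀ α : A, ⟪b x t α, n x⟫ < 0}

/-- Outward part of the boundary for time-dependent drift. -/
def GammaOutT (Ω : Set (Euc N)) (n : Euc N → Euc N) {A : Type}
    (b : Euc N → ℝ → A → Euc N) : Set (Euc N) :=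
  {x | x ∈ frontier Ω ∧ ∀ t ∈ Ici (0:ℝ), ∀ α : A, 0 < ⟪b x t α, n x⟫}

/-- Mixed part of the boundary for time-dependent drift. -/
def GammaMixT (Ω : Set (Euc N)) (n : Euc N → Euc N) {A : Type}
    (b : Euc N → ℝ → A → Euc N) : Set (Euc N) :=
  {x | x ∈ frontier Ω ∧ ∀ t ∈ Ici (0:ℝ),
    ∃ α₁ α₂ : A, ⟪b x t α₁, n x⟫ < 0 ∧ 0 < ⟪b x t α₂, n x⟫}

/-- Assumption (B'). -/
def AssumptionB' (Ω : Set (Euc N)) (n : Euc N → Euc N) {A : Type}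
    (b : Euc N → ℝ → A → Euc N) : Prop :=
  GammaInT Ω n b ∪ GammaOutT Ω n b ∪ GammaMixT Ω n b = frontier Ω ∧
  IsUnionOfComponents (GammaInT Ω n b) (frontier Ω) ∧
  IsUnionOfComponents (GammaOutT Ω n b) (frontier Ω) ∧
  IsUnionOfComponents (GammaMixT Ω n b) (frontier Ω)

/-- All the structural assumptions on a parabolic Bellman Hamiltonian: (C'), (L'), (B'). -/
def ParBellmanOK (Ω : Set (Euc N)) (n : Euc N → Euc N) {A : Type} [TopologicalSpace A]
    (lam : Euc N → ℝ → A → ℝ) (b : Euc N → ℝ → A → Euc N) (l : Euc N → ℝ → A → ℝ)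
    (H : Euc N → ℝ → ℝ → Euc N → ℝ) : Prop :=
  ParBellmanData lam b l ∧ IsParBellman lam b l H ∧
  AssumptionC' Ω lam l ∧ AssumptionL' Ω b ∧ AssumptionB' Ω n b

/-- Assumption (H'): monotonicity of `H` in the `u` variable. -/
def AssumptionH' (Ω : Set (Euc N)) (H : Euc N → ℝ → ℝ → Euc N → ℝ) : Prop :=
  ∃ K : ℝ, ∀ R > (0:ℝ), ∃ γ, -K ≤ γ ∧
    ∀ x ∈ closure Ω, ∀ t ∈ Icc (0:ℝ) R, ∀ r s : ℝ, |r| ≤ R → |s| ≤ R → s ≤ r →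
      ∀ p : Euc N, γ * (r - s) ≤ H x t r p - H x t s p

/-- Assumption (H''): the monotonicity constants `γ_R` are bounded below by some `γ₀ > 0`. -/
def AssumptionH'' (Ω : Set (Euc N)) (H : Euc N → ℝ → ℝ → Euc N → ℝ) : Prop :=
  ∃ γ₀ > (0:ℝ), ∀ R > (0:ℝ), ∃ γ, γ₀ ≤ γ ∧
    ∀ x ∈ closure Ω, ∀ t ∈ Icc (0:ℝ) R, ∀ r s : ℝ, |r| ≤ R → |s| ≤ R → s ≤ r →
      ∀ p : Euc N, γ * (r - s) ≤ H x t r p - H x t s p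

/-- Assumption (E'). -/
def AssumptionE' (Ω : Set (Euc N)) (H : Euc N → ℝ → ℝ → Euc N → ℝ) : Prop :=
  ∀ T > (0:ℝ), ∀ R > (0:ℝ), ∃ HR : ℝ, ∀ x ∈ Ω, ∀ t ∈ Icc (0:ℝ) T, ∀ r : ℝ, ∀ p : Euc N,
    |r| ≤ R → ‖p‖ ≤ R → |H x t r p| ≤ HR

/-- Assumption (H0'): separated structure `H(x,t,r,p) = H₀(x,r,p) - f(x,t)`. -/
def AssumptionH0' (H : Euc N → ℝ → ℝ → Euc N → ℝ) : Prop :=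
  ∃ (H₀ : Euc N → ℝ → Euc N → ℝ) (f : Euc N → ℝ → ℝ),
    Continuous (fun q : Euc N × ℝ × Euc N => H₀ q.1 q.2.1 q.2.2) ∧
    UniformContinuous (fun q : Euc N × ℝ => f q.1 q.2) ∧
    (∃ M, ∀ x t, |f x t| ≤ M) ∧
    ∀ x t r p, H x t r p = H₀ x r p - f x t

/-- Assumption (He'): `H` satisfies (H1), (Ha) in `x`, uniformly in `t`
and uniformly on compact sets in `r` (sublinearly coercive case). -/
def AssumptionHe' (Ω : Set (Euc N)) (H : Euc N → ℝ → ℝ → Euc N → ℝ) (σ : ℝ) : Prop :=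
  ∃ m : ℝ, σ < m ∧ m ≤ 1 ∧
    ∀ R > (0:ℝ),
      (∃ c₀ > (0:ℝ), ∃ D > (0:ℝ), ∀ x ∈ closure Ω, ∀ t ∈ Ici (0:ℝ), ∀ r : ℝ, |r| ≤ R →
        ∀ p : Euc N, c₀ * ‖p‖ ^ m - D ≤ H x t r p) ∧
      (∃ C > (0:ℝ), ∃ ω₁, IsModulus ω₁ ∧ ∀ x y : Euc N, ∀ t ∈ Ici (0:ℝ), ∀ r : ℝ, |r| ≤ R →
        ∀ p q : Euc N, H y t r p - H x t r q ≤ ω₁ ‖x - y‖ * (1 + ‖p‖) + C * ‖p - q‖)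

/-- Assumption (He''): `H` satisfies (H1), (Hb), (Hc) in `x`, uniformly in `t`
and uniformly on compact sets in `r` (superlinearly coercive case, exponent `m`). -/
def AssumptionHe'' (Ω : Set (Euc N)) (H : Euc N → ℝ → ℝ → Euc N → ℝ) (σ m : ℝ) : Prop :=
  1 < m ∧ σ < m ∧
  ∀ R > (0:ℝ),
    (∃ c₀ > (0:ℝ), ∃ D > (0:ℝ), ∀ x ∈ closure Ω, ∀ t ∈ Ici (0:ℝ), ∀ r : ℝ, |r| ≤ R →
      ∀ p : Euc N, c₀ * ‖p‖ ^ m - D ≤ H x t r p) ∧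
    (∃ A > (0:ℝ), ∃ Cb > (0:ℝ), ∀ μ ∈ Ioo (0:ℝ) 1, ∀ x ∈ closure Ω, ∀ t ∈ Ici (0:ℝ),
      ∀ r : ℝ, |r| ≤ R → ∀ p : Euc N,
        H x t r p - μ * H x t r (μ⁻¹ • p) ≤ (1 - μ) * (Cb * (1 - m) * ‖p‖ ^ m + A)) ∧
    (∃ C > (0:ℝ), ∃ ω₁, IsModulus ω₁ ∧ ∀ x y : Euc N, ∀ t ∈ Ici (0:ℝ), ∀ r : ℝ, |r| ≤ R →
      ∀ p q : Euc N, H y t r p - H x t r q ≤ ω₁ ‖x - y‖ * (1 + (max ‖p‖ ‖q‖) ^ m)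
        + C * ‖p - q‖ * (max ‖p‖ ‖q‖) ^ (m - 1))

/-- Structural parabolic coercive assumptions: (H0') and (He') or (He''). -/
def ParCoerciveOK (Ω : Set (Euc N)) (H : Euc N → ℝ → ℝ → Euc N → ℝ) (σ : ℝ) : Prop :=
  AssumptionH0' H ∧ (AssumptionHe' Ω H σ ∨ ∃ m, AssumptionHe'' Ω H σ m)

/-! ### Iterative covering property -/

/-- The iterated reachable sets `X_r(x)` of the censored jump process. -/
def Xiter (Ω : Set (Euc N)) (j : Euc N → Euc N → Euc N) (g : Euc N → Euc N → ℝ)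
    (x : Euc N) : ℕ → Set (Euc N)
  | 0 => {x}
  | r + 1 => (⋃ ξ ∈ Xiter Ω j g x r,
      (fun z => ξ + j ξ z) '' closure (Function.support (g ξ))) ∩ closure Ω

/-- Iterative covering property: `𝒳(x) = Ω` (i.e. the closure of the reachable set
is all of `closure Ω`) for every `x ∈ Ω`. -/
def CoveringProperty (Ω : Set (Euc N)) (j : Euc N → Euc N → Euc N)
    (g : Euc N → Euc N → ℝ) : Prop :=
  ∀ x ∈ Ω, closure (⋃ r : ℕ, Xiter Ω j g x r) = closure Ω

/-!
For `z ∈ J_{s₁} \ J_{s₂}` one has `d(s₁ + j(s₁, z)) ≥ 0 > d(s₂ + j(s₂, z))`. Since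
`d(s₁) = d(s₂)`, the difference of these two values is a difference of two increments of `d`,
which is only `O(|z| |s₁ - s₂|)` because `Dd` is Lipschitz on the chart. Hence `s₁ + j(s₁, z)`
lies in a slab `0 ≤ d ≤ B |z| |s₁ - s₂|`. The chart flattens this slab and `j(s₁, ·)` does not
contract distances by more than a constant factor, so the part of `J_{s₁} \ J_{s₂}` in
`{|z| ≤ τ}` has volume `O(τ ^ (N - 1) * τ |s₁ - s₂|)`. Integrating `|z| ^ (-(N + σ - 1))` over
dyadic shells then gives a geometric series, which converges because `N + σ - 1 < N`.
-/

theorem addHaar_preimage_le_of_antilipschitz {E : Type*} [NormedAddCommGroup E]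
    [NormedSpace ℝ E] [FiniteDimensional ℝ E] [MeasurableSpace E] [BorelSpace E]
    (μ : Measure E) [μ.IsAddHaarMeasure] {K : ℝ≥0} {f : E → E} (hf : AntilipschitzWith K f)
    (s : Set E) : μ (f ⁻¹' s) ≤ K ^ Module.finrank ℝ E * μ s := by
  have := Measure.isAddLeftInvariant_eq_smul μ μH[Module.finrank ℝ E]
  rw [this]
  simp only [Measure.smul_apply, mul_smul_comm]
  gcongr
  simpa using hf.hausdorffMeasure_preimage_le (Nat.cast_nonneg _) s

theorem volume_closedBall_inter_apply_mem_Icc_le {ι : Type*} [Fintype ι]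
    (x : EuclideanSpace ℝ ι) (i : ι) (R a b : ℝ) :
    volume (closedBall x R ∩ {w | w i ∈ Icc a b}) ≤
      ENNReal.ofReal (b - a) * ENNReal.ofReal (2 * R) ^ (Fintype.card ι - 1) := by
  classical
  let sides : ι → Set ℝ := Function.update (fun k => closedBall (x k) R) i (Icc a b)
  have hsub : closedBall x R ∩ {w | w i ∈ Icc a b} ⊆ WithLp.ofLp ⁻¹' univ.pi sides := by
    rintro w ⟨hw, hwi⟩
    refine mem_univ_pi.2 ((Function.forall_update_iff _ fun k S => w k ∈ S).2
      ⟨hwi, fun k _ => ?_⟩)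
    exact (PiLp.norm_apply_le (w - x) k).trans (mem_closedBall_iff_norm.1 hw)
  have hsides : ∀ k, volume (sides k) =
      Function.update (fun _ => ENNReal.ofReal (2 * R)) i (ENNReal.ofReal (b - a)) k := by
    intro k
    rw [Function.apply_update (fun _ => volume)]
    simp only [Real.volume_closedBall, Real.volume_Icc]
  calc volume (closedBall x R ∩ {w | w i ∈ Icc a b})
      ≤ volume (WithLp.ofLp ⁻¹' univ.pi sides) := measure_mono hsub
    _ ≤ volume (univ.pi sides) := (PiLp.volume_preserving_ofLp ι).measure_preimage_le _
    _ = ENNReal.ofReal (b - a) * ENNReal.ofReal (2 * R) ^ (Fintype.card ι - 1) := by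
      simp only [volume_pi_pi, hsides, Finset.prod_update_of_mem (Finset.mem_univ i),
        Finset.prod_const, Finset.card_sdiff_of_subset (Finset.subset_univ _), Finset.card_univ,
        Finset.card_singleton]

theorem det_ne_zero_of_hasFDerivAt_of_leftInvOn {E : Type*} [NormedAddCommGroup E]
    [NormedSpace ℝ E] {f g : E → E} {f' : E →L[ℝ] E} {U : Set E} {x : E} (hU : U ∈ 𝓝 x)
    (hf : HasFDerivAt f f' x) (hg : DifferentiableWithinAt ℝ g (f '' U) (f x))
    (hgf : LeftInvOn g f U) : f'.det ≠ 0 := by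
  obtain ⟨g', hg'⟩ := hg
  have hcomp : HasFDerivAt (g ∘ f) (g' ∘L f') x :=
    (hg'.comp x hf.hasFDerivWithinAt (mapsTo_image f U)).hasFDerivAt hU
  have hid : HasFDerivAt (g ∘ f) (ContinuousLinearMap.id ℝ E) x :=
    (hasFDerivAt_id x).congr_of_eventuallyEq (mem_of_superset hU hgf)
  have hdet : g'.det * f'.det = 1 := by
    rw [ContinuousLinearMap.det, ContinuousLinearMap.det, ← LinearMap.det_comp,
      ← ContinuousLinearMap.toLinearMap_comp, hcomp.unique hid]
    exact LinearMap.det_id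
  exact right_ne_zero_of_mul_eq_one hdet

theorem exists_addHaar_le_mul_addHaar_image_of_isCompact {E : Type*} [NormedAddCommGroup E]
    [NormedSpace ℝ E] [FiniteDimensional ℝ E] [MeasurableSpace E] [BorelSpace E]
    (μ : Measure E) [μ.IsAddHaarMeasure] {f : E → E} {f' : E → E →L[ℝ] E} {k : Set E}
    (hk : IsCompact k) (hf : ∀ x ∈ k, HasFDerivWithinAt f (f' x) k x) (hf' : ContinuousOn f' k)
    (hdet : ∀ x ∈ k, (f' x).det ≠ 0) (hinj : InjOn f k) :
    ∃ C : ℝ≥0, ∀ s ⊆ k, MeasurableSet s → μ s ≤ C * μ (f '' s) := by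
  obtain ⟨c, hc, hcdet⟩ : ∃ c > 0, ∀ x ∈ k, c ≤ |(f' x).det| :=
    hk.exists_forall_le'
      (ContinuousLinearMap.continuous_det.comp_continuousOn hf').abs
      fun x hx => abs_pos.2 (hdet x hx)
  lift c to ℝ≥0 using hc.le
  refine ⟨c⁻¹, fun s hs hsm => ?_⟩
  have hc₀ : c ≠ 0 := by simpa using hc.ne'
  rw [ENNReal.coe_inv hc₀,
    ← ENNReal.mul_le_iff_le_inv (ENNReal.coe_ne_zero.2 hc₀) ENNReal.coe_ne_top]
  calc (c : ℝ≥0∞) * μ s = ∫⁻ _ in s, ENNReal.ofReal c ∂μ := by simp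
    _ ≤ ∫⁻ x in s, ENNReal.ofReal |(f' x).det| ∂μ :=
      setLIntegral_mono' hsm fun x hx => ENNReal.ofReal_le_ofReal (hcdet x (hs hx))
    _ = μ (f '' s) :=
      lintegral_abs_det_fderiv_eq_addHaar_image μ hsm (fun x hx => (hf x (hs hx)).mono hs)
        (hinj.mono hs)

theorem norm_increment_sub_increment_le_of_convex {E F : Type*} [NormedAddCommGroup E]
    [NormedSpace ℝ E] [NormedAddCommGroup F] [NormedSpace ℝ F] {f : E → F} {f' : E → E →L[ℝ] F}
    {s : Set E} {L M : ℝ≥0} (hs : Convex ℝ s) (hf : ∀ x ∈ s, HasFDerivWithinAt f (f' x) s x)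
    (hL : LipschitzOnWith L f' s) (hM : ∀ x ∈ s, ‖f' x‖ ≤ M) {x y a b : E}
    (hx : x ∈ s) (hxa : x + a ∈ s) (hy : y ∈ s) (hyb : y + b ∈ s) :
    ‖(f (x + a) - f x) - (f (y + b) - f y)‖ ≤
      L * (‖x - y‖ + ‖a - b‖) * ‖a‖ + M * ‖a - b‖ := by
  have hpath : ∀ {z c : E}, z ∈ s → z + c ∈ s → ∀ t ∈ Icc (0 : ℝ) 1,
      HasDerivWithinAt (fun t : ℝ => f (z + t • c)) (f' (z + t • c) c) (Icc 0 1) t := by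
    intro z c hz hzc t ht
    have hline : HasDerivWithinAt (fun t : ℝ => z + t • c) c (Icc 0 1) t := by
      simpa using (((hasDerivAt_id t).smul_const c).const_add z).hasDerivWithinAt
    exact (hf _ (hs.add_smul_mem hz hzc ht)).comp_hasDerivWithinAt t hline
      fun u hu => hs.add_smul_mem hz hzc hu
  have hspeed : ∀ t ∈ Ico (0 : ℝ) 1, ‖f' (x + t • a) a - f' (y + t • b) b‖ ≤
      L * (‖x - y‖ + ‖a - b‖) * ‖a‖ + M * ‖a - b‖ := by
    intro t ht
    have hxt := hs.add_smul_mem hx hxa (Ico_subset_Icc_self ht)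
    have hyt := hs.add_smul_mem hy hyb (Ico_subset_Icc_self ht)
    have hdist : ‖(x + t • a) - (y + t • b)‖ ≤ ‖x - y‖ + ‖a - b‖ :=
      calc ‖(x + t • a) - (y + t • b)‖ = ‖(x - y) + t • (a - b)‖ := by
            rw [smul_sub, add_sub_add_comm]
        _ ≤ ‖x - y‖ + ‖t • (a - b)‖ := norm_add_le _ _
        _ ≤ ‖x - y‖ + ‖a - b‖ := by
            rw [norm_smul, Real.norm_of_nonneg ht.1]
            gcongr
            exact mul_le_of_le_one_left (norm_nonneg _) ht.2.le
    calc ‖f' (x + t • a) a - f' (y + t • b) b‖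
        = ‖(f' (x + t • a) - f' (y + t • b)) a + f' (y + t • b) (a - b)‖ := by simp
      _ ≤ ‖f' (x + t • a) - f' (y + t • b)‖ * ‖a‖ + ‖f' (y + t • b)‖ * ‖a - b‖ :=
          norm_add_le_of_le (ContinuousLinearMap.le_opNorm _ _)
            (ContinuousLinearMap.le_opNorm _ _)
      _ ≤ L * (‖x - y‖ + ‖a - b‖) * ‖a‖ + M * ‖a - b‖ := by
          gcongr
          · exact (hL.norm_sub_le hxt hyt).trans (by gcongr)
          · exact hM _ hyt
  simpa [sub_sub_sub_comm] using norm_image_sub_le_of_norm_deriv_le_segment_01'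
    (fun t ht => (hpath hx hxa t ht).sub (hpath hy hyb t ht)) hspeed

theorem rpow_neg_le_of_mem_Icc_half {ρ x : ℝ} (hρ : 0 < ρ) (hx : x ∈ Icc (ρ / 2) ρ) (p : ℝ) :
    x ^ (-p) ≤ 2 ^ |p| * ρ ^ (-p) := by
  have hx₀ : 0 < x := (half_pos hρ).trans_le hx.1
  rcases le_total 0 p with hp | hp
  · calc x ^ (-p) ≤ (ρ / 2) ^ (-p) :=
          Real.rpow_le_rpow_of_nonpos (half_pos hρ) hx.1 (neg_nonpos.2 hp)
      _ = 2 ^ |p| * ρ ^ (-p) := by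
          rw [abs_of_nonneg hp, Real.div_rpow hρ.le zero_le_two, Real.rpow_neg zero_le_two,
            div_inv_eq_mul, mul_comm]
  · calc x ^ (-p) ≤ ρ ^ (-p) := Real.rpow_le_rpow hx₀.le hx.2 (neg_nonneg.2 hp)
      _ ≤ 2 ^ |p| * ρ ^ (-p) :=
          le_mul_of_one_le_left (by positivity)
            (Real.one_le_rpow one_le_two (abs_nonneg p))

theorem setLIntegral_rpow_neg_le_of_mem_Icc_half {α : Type*} [MeasurableSpace α] {μ : Measure α}
    {g : α → ℝ} {S : Set α} {ρ : ℝ} (hρ : 0 < ρ) (hg : ∀ x ∈ S, g x ∈ Icc (ρ / 2) ρ) (p : ℝ) :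
    ∫⁻ x in S, ENNReal.ofReal (g x ^ (-p)) ∂μ ≤ ENNReal.ofReal (2 ^ |p| * ρ ^ (-p)) * μ S :=
  (setLIntegral_mono measurable_const fun x hx =>
    ENNReal.ofReal_le_ofReal (rpow_neg_le_of_mem_Icc_half hρ (hg x hx) p)).trans_eq
      (setLIntegral_const _ _)

theorem exists_mem_Ioc_dyadic {δ x : ℝ} (hx : x ∈ Ioc 0 δ) :
    ∃ k : ℕ, x ∈ Ioc (δ * (1 / 2) ^ k / 2) (δ * (1 / 2) ^ k) := by
  have hδ : 0 < δ := hx.1.trans_le hx.2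
  obtain ⟨k, hlow, hupp⟩ := exists_nat_pow_near_of_lt_one (div_pos hx.1 hδ)
    ((div_le_one hδ).2 hx.2) (one_half_pos (α := ℝ)) one_half_lt_one
  rw [lt_div_iff₀ hδ, pow_succ] at hlow
  rw [div_le_iff₀ hδ] at hupp
  exact ⟨k, by linarith, by linarith⟩

theorem lintegral_rpow_neg_le_of_measure_le {α : Type*} [MeasurableSpace α] {μ : Measure α}
    {g : α → ℝ} {A : Set α} {p n δ : ℝ} {K : ℝ≥0∞} (hpn : p < n) (hδ : 0 < δ)
    (hA : ∀ x ∈ A, g x ∈ Ioc 0 δ)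
    (hμ : ∀ ρ ∈ Ioc 0 δ, μ (A ∩ {x | g x ≤ ρ}) ≤ K * ENNReal.ofReal (ρ ^ n)) :
    ∫⁻ x in A, ENNReal.ofReal (g x ^ (-p)) ∂μ ≤
      K * ENNReal.ofReal (2 ^ |p| * δ ^ (n - p) * (1 - (1 / 2) ^ (n - p))⁻¹) := by
  let ρ : ℕ → ℝ := fun k => δ * (1 / 2) ^ k
  let q : ℝ := (1 / 2) ^ (n - p)
  have hq₀ : 0 ≤ q := by positivity
  have hq₁ : q < 1 := Real.rpow_lt_one one_half_pos.le one_half_lt_one (sub_pos.2 hpn)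
  have hρ₀ : ∀ k, 0 < ρ k := fun k => by positivity
  have hρδ : ∀ k, ρ k ≤ δ := fun k =>
    mul_le_of_le_one_right hδ.le (pow_le_one₀ one_half_pos.le one_half_lt_one.le)
  have hρ_rpow : ∀ k, ρ k ^ (n - p) = δ ^ (n - p) * q ^ k := fun k => by
    rw [Real.mul_rpow hδ.le (by positivity), Real.rpow_pow_comm one_half_pos.le]
  let S : ℕ → Set α := fun k => A ∩ {x | g x ∈ Ioc (ρ k / 2) (ρ k)}
  have hcover : A ⊆ ⋃ k, S k := fun x hx =>
    let ⟨k, hk⟩ := exists_mem_Ioc_dyadic (hA x hx)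
    mem_iUnion.2 ⟨k, hx, hk⟩
  have hshell : ∀ k, ∫⁻ x in S k, ENNReal.ofReal (g x ^ (-p)) ∂μ ≤
      K * ENNReal.ofReal (2 ^ |p| * δ ^ (n - p) * q ^ k) := fun k =>
    calc ∫⁻ x in S k, ENNReal.ofReal (g x ^ (-p)) ∂μ
        ≤ ENNReal.ofReal (2 ^ |p| * ρ k ^ (-p)) * μ (S k) :=
          setLIntegral_rpow_neg_le_of_mem_Icc_half (hρ₀ k) (fun x hx => Ioc_subset_Icc_self hx.2) p
      _ ≤ ENNReal.ofReal (2 ^ |p| * ρ k ^ (-p)) * (K * ENNReal.ofReal (ρ k ^ n)) := by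
          gcongr
          exact (measure_mono (inter_subset_inter_right A fun x hx => hx.2)).trans
            (hμ (ρ k) ⟨hρ₀ k, hρδ k⟩)
      _ = K * ENNReal.ofReal (2 ^ |p| * (ρ k ^ (-p) * ρ k ^ n)) := by
          rw [mul_left_comm, ← ENNReal.ofReal_mul (by have := hρ₀ k; positivity), mul_assoc]
      _ = K * ENNReal.ofReal (2 ^ |p| * δ ^ (n - p) * q ^ k) := by
          rw [← Real.rpow_add (hρ₀ k), neg_add_eq_sub, hρ_rpow, ← mul_assoc]
  calc ∫⁻ x in A, ENNReal.ofReal (g x ^ (-p)) ∂μ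
      ≤ ∫⁻ x in ⋃ k, S k, ENNReal.ofReal (g x ^ (-p)) ∂μ := lintegral_mono_set hcover
    _ ≤ ∑' k, ∫⁻ x in S k, ENNReal.ofReal (g x ^ (-p)) ∂μ := lintegral_iUnion_le _ _
    _ ≤ ∑' k, K * ENNReal.ofReal (2 ^ |p| * δ ^ (n - p) * q ^ k) := ENNReal.tsum_le_tsum hshell
    _ = K * ENNReal.ofReal (2 ^ |p| * δ ^ (n - p) * (1 - q)⁻¹) := by
        rw [ENNReal.tsum_mul_left, ← ENNReal.ofReal_tsum_of_nonneg (fun k => by positivity)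
          ((summable_geometric_of_lt_one hq₀ hq₁).mul_left _), tsum_mul_left,
          tsum_geometric_of_lt_one hq₀ hq₁]

theorem integrable_and_integral_le_of_lintegral_ofReal_le {α : Type*} [MeasurableSpace α]
    {μ : Measure α} {f : α → ℝ} {c : ℝ} (hf : AEStronglyMeasurable f μ) (hf₀ : 0 ≤ᵐ[μ] f)
    (hc : 0 ≤ c) (h : ∫⁻ x, ENNReal.ofReal (f x) ∂μ ≤ ENNReal.ofReal c) :
    Integrable f μ ∧ ∫ x, f x ∂μ ≤ c := by
  refine ⟨⟨hf, (hasFiniteIntegral_iff_ofReal hf₀).2 (h.trans_lt ENNReal.ofReal_lt_top)⟩, ?_⟩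
  rw [integral_eq_lintegral_of_nonneg_ae hf₀ hf]
  exact ENNReal.toReal_le_of_le_ofReal hc h

theorem mem_closure_iff_sdist_nonneg {Ω : Set (Euc N)} (hΩ : Ω.Nonempty) (x : Euc N) :
    x ∈ closure Ω ↔ 0 ≤ sdist Ω x := by
  rw [mem_closure_iff_infDist_zero hΩ, sdist, sub_nonneg]
  refine ⟨fun h => h ▸ infDist_nonneg, fun h => ?_⟩
  by_cases hx : x ∈ Ω
  · exact infDist_zero_of_mem hx
  · exact le_antisymm (h.trans_eq (infDist_zero_of_mem hx)) infDist_nonneg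

namespace IsW2Chart

variable {hN : 0 < N} {Ω : Set (Euc N)} {s₀ : Euc N} {r : ℝ} {ψ ψinv : Euc N → Euc N}

theorem hasFDerivAt (hψ : IsW2Chart hN Ω s₀ r ψ ψinv) {x : Euc N} (hx : x ∈ ball s₀ r) :
    HasFDerivAt ψ (fderiv ℝ ψ x) x :=
  ((hψ.2.1.differentiableOn one_ne_zero).differentiableAt (isOpen_ball.mem_nhds hx)).hasFDerivAt

theorem apply_last (hψ : IsW2Chart hN Ω s₀ r ψ ψinv) {x : Euc N} (hx : x ∈ ball s₀ r) :
    ψ x ⟨N - 1, Nat.sub_lt hN Nat.one_pos⟩ = sdist Ω x :=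
  hψ.2.2.2.2.2.2 x hx

theorem leftInvOn (hψ : IsW2Chart hN Ω s₀ r ψ ψinv) : LeftInvOn ψinv ψ (ball s₀ r) :=
  hψ.2.2.2.2.2.1

theorem exists_norm_fderiv_le (hψ : IsW2Chart hN Ω s₀ r ψ ψinv) :
    ∃ M : ℝ≥0, ∀ x ∈ ball s₀ r, ‖fderiv ℝ ψ x‖ ≤ M := by
  obtain ⟨hr, -, ⟨L, hL⟩, -⟩ := hψ
  refine ⟨‖fderiv ℝ ψ s₀‖₊ + L * r.toNNReal, fun x hx => ?_⟩
  have hsub := hL.norm_sub_le hx (mem_ball_self hr)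
  calc ‖fderiv ℝ ψ x‖ ≤ ‖fderiv ℝ ψ s₀‖ + ‖fderiv ℝ ψ x - fderiv ℝ ψ s₀‖ :=
        norm_le_norm_add_norm_sub' _ _
    _ ≤ ‖fderiv ℝ ψ s₀‖ + L * r := by
        gcongr
        exact hsub.trans (by gcongr; exact (mem_ball_iff_norm.1 hx).le)
    _ = _ := by simp [hr.le]

theorem det_fderiv_ne_zero (hψ : IsW2Chart hN Ω s₀ r ψ ψinv) {x : Euc N} (hx : x ∈ ball s₀ r) :
    (fderiv ℝ ψ x).det ≠ 0 :=
  det_ne_zero_of_hasFDerivAt_of_leftInvOn (isOpen_ball.mem_nhds hx) (hψ.hasFDerivAt hx)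
    (hψ.2.2.2.1.differentiableOn one_ne_zero _ (mem_image_of_mem ψ hx)) hψ.leftInvOn

theorem exists_volume_le_mul_volume_image (hψ : IsW2Chart hN Ω s₀ r ψ ψinv) {ρ : ℝ}
    (hρ : ρ < r) :
    ∃ C : ℝ≥0, ∀ T ⊆ closedBall s₀ ρ, MeasurableSet T → volume T ≤ C * volume (ψ '' T) := by
  have hsub : closedBall s₀ ρ ⊆ ball s₀ r := closedBall_subset_ball hρ
  exact exists_addHaar_le_mul_addHaar_image_of_isCompact volume (isCompact_closedBall s₀ ρ)
    (fun x hx => (hψ.hasFDerivAt (hsub hx)).hasFDerivWithinAt)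
    ((hψ.2.1.continuousOn_fderiv_of_isOpen isOpen_ball le_rfl).mono hsub)
    (fun x hx => hψ.det_fderiv_ne_zero (hsub hx)) (hψ.leftInvOn.injOn.mono hsub)

theorem exists_volume_closedBall_inter_sdist_mem_Icc_le (hψ : IsW2Chart hN Ω s₀ r ψ ψinv)
    {ρ : ℝ} (hρ : ρ < r) :
    ∃ C : ℝ≥0, ∀ (p : Euc N) (R : ℝ≥0) (a b : ℝ), closedBall p R ⊆ closedBall s₀ ρ →
      volume (closedBall p R ∩ {y | sdist Ω y ∈ Icc a b}) ≤
        C * R ^ (N - 1) * ENNReal.ofReal (b - a) := by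
  obtain ⟨M, hM⟩ := hψ.exists_norm_fderiv_le
  obtain ⟨C, hC⟩ := hψ.exists_volume_le_mul_volume_image hρ
  have hLip : LipschitzOnWith M ψ (ball s₀ r) :=
    (convex_ball s₀ r).lipschitzOnWith_of_nnnorm_hasFDerivWithin_le
      (fun x hx => (hψ.hasFDerivAt hx).hasFDerivWithinAt) hM
  refine ⟨C * (2 * M) ^ (N - 1), fun p R a b hp => ?_⟩
  set T := closedBall p R ∩ {y | sdist Ω y ∈ Icc a b}
  have hR : closedBall p R ⊆ ball s₀ r := hp.trans (closedBall_subset_ball hρ)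
  have hT : MeasurableSet T :=
    (isClosed_closedBall.inter (isClosed_Icc.preimage
      ((continuous_infDist_pt _).sub (continuous_infDist_pt _)))).measurableSet
  have himage : ψ '' T ⊆ closedBall (ψ p) (M * R) ∩
      {w | w ⟨N - 1, Nat.sub_lt hN Nat.one_pos⟩ ∈ Icc a b} := by
    rintro _ ⟨y, ⟨hy, hyd⟩, rfl⟩
    refine ⟨?_, by rwa [mem_ofPred_eq, hψ.apply_last (hR hy)]⟩
    exact (hLip.dist_le_mul y (hR hy) p (hR (mem_closedBall_self R.2))).trans
      (by gcongr; exact hy)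
  calc volume T ≤ C * volume (ψ '' T) := hC T (inter_subset_left.trans hp) hT
    _ ≤ C * (ENNReal.ofReal (b - a) * ENNReal.ofReal (2 * (M * R)) ^ (N - 1)) := by
        gcongr
        simpa using (measure_mono himage).trans
          (volume_closedBall_inter_apply_mem_Icc_le (ψ p) _ (M * R) a b)
    _ = ↑(C * (2 * M) ^ (N - 1)) * R ^ (N - 1) * ENNReal.ofReal (b - a) := by
        rw [← mul_assoc 2, ENNReal.ofReal_mul (by positivity)]
        simp only [ENNReal.ofReal_mul zero_le_two, ENNReal.ofReal_coe_nnreal, ENNReal.ofReal_ofNat]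
        push_cast
        ring

theorem exists_sdist_increment_sub_increment_le (hψ : IsW2Chart hN Ω s₀ r ψ ψinv) :
    ∃ L M : ℝ≥0, ∀ x y a b : Euc N, x ∈ ball s₀ r → x + a ∈ ball s₀ r → y ∈ ball s₀ r →
      y + b ∈ ball s₀ r →
      (sdist Ω (x + a) - sdist Ω x) - (sdist Ω (y + b) - sdist Ω y) ≤
        L * (‖x - y‖ + ‖a - b‖) * ‖a‖ + M * ‖a - b‖ := by
  obtain ⟨M, hM⟩ := hψ.exists_norm_fderiv_le
  obtain ⟨L, hL⟩ := hψ.2.2.1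
  refine ⟨L, M, fun x y a b hx hxa hy hyb => ?_⟩
  rw [← hψ.apply_last hx, ← hψ.apply_last hxa, ← hψ.apply_last hy, ← hψ.apply_last hyb]
  exact (le_abs_self _).trans ((PiLp.norm_apply_le _ _).trans
    (norm_increment_sub_increment_le_of_convex (convex_ball s₀ r)
      (fun z hz => (hψ.hasFDerivAt hz).hasFDerivWithinAt) hL hM hx hxa hy hyb))

end IsW2Chart

/-- The set `J_s` of the jumps which keep a process sitting at `s` inside `closure Ω`. -/
def jumpSet (Ω : Set (Euc N)) (j : Euc N → Euc N → Euc N) (s : Euc N) : Set (Euc N) :=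
  {z | s + j s z ∈ closure Ω}

/-- A common weakening of (J0) and (J1): for base points `x ∈ closure Ω`, the jump function
`j x` expands distances by at least the factor `K⁻¹` and obeys the upper bounds of (J1). -/
structure IsLipschitzJump (Ω : Set (Euc N)) (j : Euc N → Euc N → Euc N) (K C D : ℝ≥0) :
    Prop where
  antilipschitz : ∀ x ∈ closure Ω, AntilipschitzWith K (j x)
  norm_le : ∀ x ∈ closure Ω, ∀ z, ‖j x z‖ ≤ C * ‖z‖
  norm_sub_le : ∀ x ∈ closure Ω, ∀ y ∈ closure Ω, ∀ z, ‖j x z - j y z‖ ≤ D * ‖z‖ * ‖x - y‖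

theorem AssumptionJ0.antilipschitzWith {Ω : Set (Euc N)} {j : Euc N → Euc N → Euc N} {A : ℝ}
    (hj : AssumptionJ0 Ω j A) {x : Euc N} (hx : x ∈ closure Ω) :
    AntilipschitzWith A.toNNReal (j x) := by
  obtain ⟨-, hbij, hinv, hA⟩ := hj x hx
  have hlip : LipschitzWith A.toNNReal (invFun (j x)) :=
    lipschitzWith_of_nnnorm_fderiv_le (hinv.differentiable one_ne_zero)
      fun z => NNReal.le_toNNReal_of_coe_le (hA z)
  exact hlip.to_rightInverse (leftInverse_invFun hbij.injective)

theorem AssumptionJ1.isLipschitzJump {Ω : Set (Euc N)} {j : Euc N → Euc N → Euc N}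
    {A C' C D : ℝ} (hj₁ : AssumptionJ1 Ω j C' C D) (hj₀ : AssumptionJ0 Ω j A) :
    IsLipschitzJump Ω j A.toNNReal C.toNNReal D.toNNReal where
  antilipschitz _ hx := hj₀.antilipschitzWith hx
  norm_le x hx z := by
    obtain ⟨-, hC, -, hj, -⟩ := hj₁
    simpa only [Real.coe_toNNReal C hC.le] using (hj x hx z).2
  norm_sub_le := by
    obtain ⟨-, -, hD, -, hj⟩ := hj₁
    simpa only [Real.coe_toNNReal D hD.le] using hj

namespace IsLipschitzJump

variable {hN : 0 < N} {Ω : Set (Euc N)} {s₀ : Euc N} {r : ℝ} {ψ ψinv : Euc N → Euc N}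
  {j : Euc N → Euc N → Euc N} {K C D δ₀ : ℝ≥0}

theorem apply_zero (hj : IsLipschitzJump Ω j K C D) {s : Euc N} (hs : s ∈ closure Ω) :
    j s 0 = 0 := by
  simpa using hj.norm_le s hs 0

theorem zero_mem_jumpSet (hj : IsLipschitzJump Ω j K C D) {s : Euc N} (hs : s ∈ closure Ω) :
    0 ∈ jumpSet Ω j s := by
  simpa [jumpSet, hj.apply_zero hs] using hs

theorem antilipschitzWith_add (hj : IsLipschitzJump Ω j K C D) {s : Euc N}
    (hs : s ∈ closure Ω) : AntilipschitzWith K fun z => s + j s z :=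
  AntilipschitzWith.of_le_mul_dist fun z w => by
    simpa only [dist_add_left] using (hj.antilipschitz s hs).le_mul_dist z w

theorem add_mem_ball (hj : IsLipschitzJump Ω j K C D) (hδ₀ : C * δ₀ < r / 2) {s : Euc N}
    (hs : s ∈ ball s₀ (r / 2) ∩ closure Ω) {z : Euc N} (hz : ‖z‖ ≤ δ₀) :
    s + j s z ∈ ball s₀ r := by
  have hjz : dist (s + j s z) s ≤ C * δ₀ := by
    rw [dist_self_add_left]
    exact (hj.norm_le s hs.2 z).trans (by gcongr)
  exact mem_ball.2 ((dist_triangle _ s _).trans_lt (by linarith [mem_ball.1 hs.1]))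

theorem exists_sdist_add_sub_sdist_add_le (hj : IsLipschitzJump Ω j K C D)
    (hψ : IsW2Chart hN Ω s₀ r ψ ψinv) (hδ₀ : C * δ₀ < r / 2) :
    ∃ B : ℝ≥0, ∀ s₁ ∈ ball s₀ (r / 2) ∩ closure Ω, ∀ s₂ ∈ ball s₀ (r / 2) ∩ closure Ω,
      sdist Ω s₁ = sdist Ω s₂ → ∀ z, ‖z‖ ≤ δ₀ →
      sdist Ω (s₁ + j s₁ z) - sdist Ω (s₂ + j s₂ z) ≤ B * ‖z‖ * ‖s₁ - s₂‖ := by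
  obtain ⟨L, M, hLM⟩ := hψ.exists_sdist_increment_sub_increment_le
  refine ⟨L * (1 + D * δ₀) * C + M * D, fun s₁ hs₁ s₂ hs₂ heq z hz => ?_⟩
  have hball : ball s₀ (r / 2) ⊆ ball s₀ r := ball_subset_ball (half_le_self hψ.1.le)
  have hjz := hj.norm_sub_le s₁ hs₁.2 s₂ hs₂.2 z
  calc sdist Ω (s₁ + j s₁ z) - sdist Ω (s₂ + j s₂ z)
      = (sdist Ω (s₁ + j s₁ z) - sdist Ω s₁) - (sdist Ω (s₂ + j s₂ z) - sdist Ω s₂) := by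
        rw [heq, sub_sub_sub_cancel_right]
    _ ≤ L * (‖s₁ - s₂‖ + ‖j s₁ z - j s₂ z‖) * ‖j s₁ z‖ + M * ‖j s₁ z - j s₂ z‖ :=
        hLM s₁ s₂ _ _ (hball hs₁.1) (hj.add_mem_ball hδ₀ hs₁ hz) (hball hs₂.1)
          (hj.add_mem_ball hδ₀ hs₂ hz)
    _ ≤ L * (‖s₁ - s₂‖ + D * δ₀ * ‖s₁ - s₂‖) * (C * ‖z‖) + M * (D * ‖z‖ * ‖s₁ - s₂‖) := by
        gcongr
        · exact hjz.trans (by gcongr)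
        · exact hj.norm_le s₁ hs₁.2 z
    _ = ↑(L * (1 + D * δ₀) * C + M * D) * ‖z‖ * ‖s₁ - s₂‖ := by
        push_cast
        ring

theorem exists_jumpSet_diff_inter_subset_preimage (hj : IsLipschitzJump Ω j K C D)
    (hψ : IsW2Chart hN Ω s₀ r ψ ψinv) (hδ₀ : C * δ₀ < r / 2) :
    ∃ B : ℝ≥0, ∀ s₁ ∈ ball s₀ (r / 2) ∩ closure Ω, ∀ s₂ ∈ ball s₀ (r / 2) ∩ closure Ω,
      sdist Ω s₁ = sdist Ω s₂ → ∀ τ ≤ δ₀,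
      (jumpSet Ω j s₁ \ jumpSet Ω j s₂) ∩ {z | ‖z‖ ≤ τ} ⊆ (fun z => s₁ + j s₁ z) ⁻¹'
        (closedBall s₁ ↑(C * τ) ∩ {y | sdist Ω y ∈ Icc 0 (B * τ * ‖s₁ - s₂‖)}) := by
  obtain ⟨B, hB⟩ := hj.exists_sdist_add_sub_sdist_add_le hψ hδ₀
  refine ⟨B, fun s₁ hs₁ s₂ hs₂ heq τ hτ z ⟨⟨hz₁, hz₂⟩, (hzτ : ‖z‖ ≤ τ)⟩ => ?_⟩
  have hΩ : Ω.Nonempty := closure_nonempty_iff.1 ⟨s₁, hs₁.2⟩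
  have hin : 0 ≤ sdist Ω (s₁ + j s₁ z) := (mem_closure_iff_sdist_nonneg hΩ _).1 hz₁
  have hout : sdist Ω (s₂ + j s₂ z) < 0 :=
    not_le.1 fun h => hz₂ ((mem_closure_iff_sdist_nonneg hΩ _).2 h)
  have hle := hB s₁ hs₁ s₂ hs₂ heq z (hzτ.trans hτ)
  refine ⟨?_, hin, ?_⟩
  · rw [mem_closedBall, dist_self_add_left, NNReal.coe_mul]
    exact (hj.norm_le s₁ hs₁.2 z).trans (by gcongr)
  · calc sdist Ω (s₁ + j s₁ z) ≤ B * ‖z‖ * ‖s₁ - s₂‖ := by linarith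
      _ ≤ B * τ * ‖s₁ - s₂‖ := by gcongr

theorem exists_volume_jumpSet_diff_inter_le (hj : IsLipschitzJump Ω j K C D)
    (hψ : IsW2Chart hN Ω s₀ r ψ ψinv) (hδ₀ : C * δ₀ < r / 2) :
    ∃ B : ℝ≥0, ∀ s₁ ∈ ball s₀ (r / 2) ∩ closure Ω, ∀ s₂ ∈ ball s₀ (r / 2) ∩ closure Ω,
      sdist Ω s₁ = sdist Ω s₂ → ∀ τ ≤ δ₀,
      volume ((jumpSet Ω j s₁ \ jumpSet Ω j s₂) ∩ {z | ‖z‖ ≤ τ}) ≤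
        B * ‖s₁ - s₂‖ₑ * (τ : ℝ≥0∞) ^ N := by
  have hρ : r / 2 + C * δ₀ < r := by linarith
  obtain ⟨B, hB⟩ := hj.exists_jumpSet_diff_inter_subset_preimage hψ hδ₀
  obtain ⟨V, hV⟩ := hψ.exists_volume_closedBall_inter_sdist_mem_Icc_le hρ
  refine ⟨K ^ N * V * C ^ (N - 1) * B, fun s₁ hs₁ s₂ hs₂ heq τ hτ => ?_⟩
  let slab := closedBall s₁ ↑(C * τ) ∩ {y | sdist Ω y ∈ Icc 0 (B * τ * ‖s₁ - s₂‖)}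
  have hsub : closedBall s₁ ↑(C * τ) ⊆ closedBall s₀ (r / 2 + C * δ₀) :=
    closedBall_subset_closedBall' <|
      calc (C * τ : ℝ≥0) + dist s₁ s₀ ≤ C * δ₀ + r / 2 := by
            push_cast
            gcongr
            exact (mem_ball.1 hs₁.1).le
        _ = r / 2 + C * δ₀ := add_comm _ _
  calc volume ((jumpSet Ω j s₁ \ jumpSet Ω j s₂) ∩ {z | ‖z‖ ≤ τ})
      ≤ volume ((fun z => s₁ + j s₁ z) ⁻¹' slab) :=
        measure_mono (hB s₁ hs₁ s₂ hs₂ heq τ hτ)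
    _ ≤ K ^ N * volume slab := by
        simpa using addHaar_preimage_le_of_antilipschitz volume
          (hj.antilipschitzWith_add hs₁.2) slab
    _ ≤ K ^ N * (V * ↑(C * τ) ^ (N - 1) * ENNReal.ofReal (B * τ * ‖s₁ - s₂‖ - 0)) := by
        gcongr
        exact hV s₁ (C * τ) 0 _ hsub
    _ = ↑(K ^ N * V * C ^ (N - 1) * B) * ‖s₁ - s₂‖ₑ * (τ ^ (N - 1) * τ) := by
        rw [sub_zero, ENNReal.ofReal_mul (by positivity), ENNReal.ofReal_mul (by positivity),
          ofReal_norm, ENNReal.ofReal_coe_nnreal, ENNReal.ofReal_coe_nnreal]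
        push_cast
        ring
    _ = ↑(K ^ N * V * C ^ (N - 1) * B) * ‖s₁ - s₂‖ₑ * τ ^ N := by
        rw [pow_sub_one_mul hN.ne']

theorem exists_lintegral_jumpSet_diff_le (hj : IsLipschitzJump Ω j K C D)
    (hψ : IsW2Chart hN Ω s₀ r ψ ψinv) (hδ₀ : 0 < δ₀) (hδ₀' : C * δ₀ < r / 2) {p : ℝ}
    (hp : p < N) :
    ∃ B : ℝ≥0, ∀ s₁ ∈ ball s₀ (r / 2) ∩ closure Ω, ∀ s₂ ∈ ball s₀ (r / 2) ∩ closure Ω,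
      sdist Ω s₁ = sdist Ω s₂ →
      ∫⁻ z in (jumpSet Ω j s₁ \ jumpSet Ω j s₂) ∩ {z | ‖z‖ ≤ δ₀}, ENNReal.ofReal (‖z‖ ^ (-p)) ≤
        B * ‖s₁ - s₂‖ₑ := by
  obtain ⟨B, hB⟩ := hj.exists_volume_jumpSet_diff_inter_le hψ hδ₀'
  refine ⟨B * (2 ^ |p| * (δ₀ : ℝ) ^ (N - p) * (1 - (1 / 2) ^ (N - p))⁻¹).toNNReal,
    fun s₁ hs₁ s₂ hs₂ heq => ?_⟩
  let A := (jumpSet Ω j s₁ \ jumpSet Ω j s₂) ∩ {z | ‖z‖ ≤ δ₀}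
  have hA : ∀ z ∈ A, ‖z‖ ∈ Ioc (0 : ℝ) δ₀ := fun z hz =>
    ⟨norm_pos_iff.2 fun h => hz.1.2 (h ▸ hj.zero_mem_jumpSet hs₂.2), hz.2⟩
  have hvol : ∀ τ ∈ Ioc (0 : ℝ) δ₀, volume (A ∩ {z | ‖z‖ ≤ τ}) ≤
      B * ‖s₁ - s₂‖ₑ * ENNReal.ofReal (τ ^ (N : ℝ)) := by
    intro τ hτ
    lift τ to ℝ≥0 using hτ.1.le
    rw [Real.rpow_natCast, ENNReal.ofReal_pow τ.coe_nonneg, ENNReal.ofReal_coe_nnreal]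
    exact (measure_mono (inter_subset_inter_left _ inter_subset_left)).trans
      (hB s₁ hs₁ s₂ hs₂ heq τ hτ.2)
  rw [ENNReal.coe_mul, mul_right_comm]
  exact lintegral_rpow_neg_le_of_measure_le hp hδ₀ hA hvol

end IsLipschitzJump

theorem boundary_rectification_general {hN : 0 < N} {Ω : Set (Euc N)} {s₀ : Euc N} {r : ℝ}
    {ψ ψinv : Euc N → Euc N} {j : Euc N → Euc N → Euc N} {K C D : ℝ≥0} {σ δ₀ : ℝ}
    (hψ : IsW2Chart hN Ω s₀ r ψ ψinv) (hj : IsLipschitzJump Ω j K C D) (hσ : σ < 1)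
    (hδ₀ : 0 < δ₀) (hδ₀' : C * δ₀ < r / 2) :
    ∃ B > (0 : ℝ), ∀ s₁ ∈ ball s₀ (r / 2) ∩ closure Ω, ∀ s₂ ∈ ball s₀ (r / 2) ∩ closure Ω,
      sdist Ω s₁ = sdist Ω s₂ →
      IntegrableOn (fun z : Euc N => ‖z‖ ^ (-((N : ℝ) + σ - 1)))
          ((jumpSet Ω j s₁ \ jumpSet Ω j s₂) ∩ {z | ‖z‖ ≤ δ₀}) ∧
        ∫ z in (jumpSet Ω j s₁ \ jumpSet Ω j s₂) ∩ {z | ‖z‖ ≤ δ₀},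
          ‖z‖ ^ (-((N : ℝ) + σ - 1)) ≤ B * ‖s₁ - s₂‖ := by
  lift δ₀ to ℝ≥0 using hδ₀.le
  have hp : (N : ℝ) + σ - 1 < N := by linarith
  obtain ⟨B, hB⟩ := hj.exists_lintegral_jumpSet_diff_le hψ hδ₀ hδ₀' hp
  refine ⟨B + 1, by positivity, fun s₁ hs₁ s₂ hs₂ heq => ?_⟩
  refine integrable_and_integral_le_of_lintegral_ofReal_le
    (measurable_norm.pow_const _).aestronglyMeasurable (ae_of_all _ fun z => by positivity)
    (by positivity) ((hB s₁ hs₁ s₂ hs₂ heq).trans ?_)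
  rw [← ofReal_norm, ← ENNReal.ofReal_coe_nnreal, ← ENNReal.ofReal_mul B.coe_nonneg]
  gcongr
  exact le_add_of_nonneg_right zero_le_one

/-- **Key boundary-rectification estimate (Lemma `claimlip`).**  Let `Ω` be of class
`W^{2,∞}` with a boundary chart of radius `r` at `s₀ ∈ ∂Ω`, let `j` satisfy (J0), (J1),
`σ ∈ (0,1)` and `0 < δ₀ < r C_j⁻¹ / 2`.  Then there is `C > 0` such that for all
`s₁, s₂ ∈ B_{r/2}(s₀) ∩ closure Ω` with `d(s₁) = d(s₂)`,
`∫_{(J_{s₁} \ J_{s₂}) ∩ {|z| ≤ δ₀}} |z|^{-(N+σ-1)} dz ≤ C |s₁ - s₂|`. -/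
theorem boundary_rectification
    (hN : 0 < N) (Ω : Set (Euc N)) (hΩ : IsOpen Ω)
    (s₀ : Euc N) (hs₀ : s₀ ∈ frontier Ω)
    (r : ℝ) (ψ ψinv : Euc N → Euc N) (hchart : IsW2Chart hN Ω s₀ r ψ ψinv)
    (j : Euc N → Euc N → Euc N) (Aj : ℝ) (hJ0 : AssumptionJ0 Ω j Aj)
    (Cj' Cj Dj : ℝ) (hJ1 : AssumptionJ1 Ω j Cj' Cj Dj)
    (σ : ℝ) (hσ : σ ∈ Ioo (0:ℝ) 1)
    (δ₀ : ℝ) (hδ₀ : 0 < δ₀) (hδ₀' : δ₀ < r * Cj⁻¹ / 2) :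
    ∃ C > (0:ℝ), ∀ s₁ ∈ ball s₀ (r / 2) ∩ closure Ω, ∀ s₂ ∈ ball s₀ (r / 2) ∩ closure Ω,
      sdist Ω s₁ = sdist Ω s₂ →
      (∫ z in ({z : Euc N | s₁ + j s₁ z ∈ closure Ω} \
          {z : Euc N | s₂ + j s₂ z ∈ closure Ω}) ∩ {z : Euc N | ‖z‖ ≤ δ₀},
        ‖z‖ ^ (-((N : ℝ) + σ - 1))) ≤ C * ‖s₁ - s₂‖ := by
  have hCjδ₀ : (Cj.toNNReal : ℝ) * δ₀ < r / 2 := by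
    rw [Real.coe_toNNReal Cj hJ1.2.1.le, mul_comm, ← lt_div_iff₀ hJ1.2.1]
    exact hδ₀'.trans_eq (by ring)
  obtain ⟨C, hC, h⟩ :=
    boundary_rectification_general hchart (hJ1.isLipschitzJump hJ0) hσ.2 hδ₀ hCjδ₀
  exact ⟨C, hC, fun s₁ hs₁ s₂ hs₂ heq => (h s₁ hs₁ s₂ hs₂ heq).2⟩

end Censored

end
end

section
/- Estimate of the truncated nonlocal terms. Assume the density bound dμ_x/dz ≤ C_μ|z|^{−(N+σ)} with σ ∈ (0,1), and (J1). Let ε ∈ (0,1), K > 0, χ_ε(r) = √(r² + ε⁴), φ ∈ C¹(ℝ^N) with bounded derivative, d a bounded Lipschitz function on cl(Ω) coinciding with the signed distance to ∂Ω near ∂Ω, and ψ(x,y) = φ((x+y)/2) + ε⁻¹χ_ε(|x−y|) + Kε⁻¹|d(x)−d(y)|. Let u be bounded usc and v bounded lsc on cl(Ω). Then for every ξ > 0 there exists a constant C₁ > 0 independent of ε such that for all x, y in cl(Ω): (i) −I_ξ[ψ(·,y)](x) − I^ξ[u](x) ≥ −ε⁻¹C₁ξ^{1−σ} − C₁ξ^{−σ};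 (ii) −I_ξ[−ψ(x,·)](y) − I^ξ[v](y) ≤ ε⁻¹C₁ξ^{1−σ} + C₁ξ^{−σ}. -/
set_option autoImplicit false

/- Common framework for censored nonlocal Hamilton–Jacobi equations with
Neumann boundary conditions (Barles-type viscosity solutions). -/

open Set Metric MeasureTheory Filter Topology Function
open scoped RealInnerProductSpace NNReal ENNReal

noncomputable section

namespace Censored

variable {N : ℕ}

/-! The test function `ψ(·, y)` is Lipschitz with constant `O(ε⁻¹)`, so `I_ξ` is controlled by
`ε⁻¹ ∫_{|z| < ξ} |z|^{1 - (N + σ)} dz`, while `I^ξ` of a bounded function is controlled by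
`∫_{|z| ≥ ξ} |z|^{-(N + σ)} dz`. Dilating by `ξ` turns these integrals into multiples of `ξ^{1 - σ}`
and `ξ^{-σ}` whose coefficients, the integrals over the unit ball and over its complement, are
finite because `0 < σ < 1`. Since `ψ` is symmetric, the second estimate is the first with the roles
of `x` and `y` exchanged. -/

section IntegralBound

variable {α E : Type*} [MeasurableSpace α] {μ : Measure α} [NormedAddCommGroup E] [NormedSpace ℝ E]

/- If `f` is a.e. strongly measurable on `s`, then the set where `‖f‖ ≤ h` is null-measurable;
otherwise the integral of `f` is the junk value `0`. -/
lemma norm_setIntegral_le_setIntegral_of_norm_le {f : α → E} {h : α → ℝ} {s t : Set α}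
    (hst : s ⊆ t) (hh : IntegrableOn h t μ) (h_nonneg : ∀ z ∈ t, 0 ≤ h z)
    (hfh : ∀ z ∈ s, ‖f z‖ ≤ h z) :
    ‖∫ z in s, f z ∂μ‖ ≤ ∫ z in t, h z ∂μ := by
  have h_nonneg_ae : 0 ≤ᵐ[μ.restrict t] h :=
    (ae_restrict_iff₀ (nullMeasurableSet_le aemeasurable_const hh.aemeasurable)).2
      (.of_forall h_nonneg)
  by_cases hf : AEStronglyMeasurable f (μ.restrict s)
  · have hhs : IntegrableOn h s μ := hh.mono_set hst
    have hfh_ae : ∀ᵐ z ∂μ.restrict s, ‖f z‖ ≤ h z :=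
      (ae_restrict_iff₀ (nullMeasurableSet_le hf.norm.aemeasurable hhs.aemeasurable)).2
        (.of_forall hfh)
    exact (norm_integral_le_of_norm_le hhs hfh_ae).trans
      (setIntegral_mono_set hh h_nonneg_ae (.of_forall hst))
  · rw [integral_undef fun hi => hf hi.aestronglyMeasurable, norm_zero]
    exact integral_nonneg_of_ae h_nonneg_ae

end IntegralBound

section PowerIntegrals

open Module (finrank)
open scoped Pointwise

variable {E : Type*} [NormedAddCommGroup E] [NormedSpace ℝ E] [FiniteDimensional ℝ E]
  [MeasurableSpace E] [BorelSpace E] {μ : Measure E} [μ.IsAddHaarMeasure] {p r : ℝ}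

lemma integrableOn_ball_norm_rpow (hp : -(finrank ℝ E : ℝ) < p) :
    IntegrableOn (fun z : E => ‖z‖ ^ p) (ball 0 r) μ := by
  rcases Nat.eq_zero_or_pos (finrank ℝ E) with hE | hE
  · have : Subsingleton E := Module.finrank_zero_iff.1 hE
    exact (Integrable.of_finite (μ := μ)).integrableOn
  · refine integrableOn_ball_of_norm_le_rpow (C := 1) (α := -p) hE (by linarith)
      (.of_forall fun z => ?_) (measurable_norm.pow_const p).aestronglyMeasurable
    rw [neg_neg, one_mul, Real.norm_of_nonneg (by positivity)]

lemma integrableOn_compl_ball_norm_rpow (hr : 0 < r) (hp : p < -(finrank ℝ E : ℝ)) :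
    IntegrableOn (fun z : E => ‖z‖ ^ p) (ball 0 r)ᶜ μ := by
  have hp₀ : p ≤ 0 := hp.le.trans (neg_nonpos.2 (Nat.cast_nonneg _))
  have hint : Integrable (fun z : E => ((1 + r⁻¹)⁻¹) ^ p * (1 + ‖z‖) ^ p) μ := by
    simpa only [neg_neg] using
      (integrable_one_add_norm (μ := μ) (r := -p) (by linarith)).const_mul (((1 + r⁻¹)⁻¹) ^ p)
  refine hint.integrableOn.mono' (measurable_norm.pow_const p).aestronglyMeasurable <|
    (ae_restrict_iff' measurableSet_ball.compl).2 (.of_forall fun z hz => ?_)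
  have hrz : r ≤ ‖z‖ := by simpa using hz
  have hcomparable : (1 + r⁻¹)⁻¹ * (1 + ‖z‖) ≤ ‖z‖ := by
    rw [inv_mul_le_iff₀ (by positivity), add_mul, one_mul, add_comm]
    gcongr
    exact (one_le_inv_mul₀ hr).2 hrz
  rw [Real.norm_of_nonneg (by positivity), ← Real.mul_rpow (by positivity) (by positivity)]
  exact Real.rpow_le_rpow_of_nonpos (by positivity) hcomparable hp₀

lemma setIntegral_smul_set_norm_rpow (s : Set E) (p : ℝ) (hr : 0 < r) :
    ∫ z in r • s, ‖z‖ ^ p ∂μ = r ^ (finrank ℝ E + p) * ∫ z in s, ‖z‖ ^ p ∂μ := by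
  have hscale : ∫ z in s, ‖r • z‖ ^ p ∂μ = r ^ p * ∫ z in s, ‖z‖ ^ p ∂μ := by
    simp_rw [norm_smul, Real.norm_of_nonneg hr.le, Real.mul_rpow hr.le (norm_nonneg _)]
    exact integral_const_mul _ _
  rw [Real.rpow_add hr, Real.rpow_natCast, mul_assoc, ← hscale,
    Measure.setIntegral_comp_smul_of_pos μ (fun z : E => ‖z‖ ^ p) s hr, smul_eq_mul,
    mul_inv_cancel_left₀ (by positivity)]

lemma setIntegral_ball_norm_rpow (p : ℝ) (hr : 0 < r) :
    ∫ z in ball (0 : E) r, ‖z‖ ^ p ∂μ =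
      r ^ (finrank ℝ E + p) * ∫ z in ball (0 : E) 1, ‖z‖ ^ p ∂μ := by
  rw [← smul_unitBall_of_pos hr, setIntegral_smul_set_norm_rpow _ _ hr]

lemma setIntegral_compl_ball_norm_rpow (p : ℝ) (hr : 0 < r) :
    ∫ z in (ball (0 : E) r)ᶜ, ‖z‖ ^ p ∂μ =
      r ^ (finrank ℝ E + p) * ∫ z in (ball (0 : E) 1)ᶜ, ‖z‖ ^ p ∂μ := by
  have hcompl : r • (ball (0 : E) 1)ᶜ = (r • ball (0 : E) 1)ᶜ :=
    smul_set_compl (a := Units.mk0 r hr.ne')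
  rw [← smul_unitBall_of_pos hr, ← hcompl, setIntegral_smul_set_norm_rpow _ _ hr]

end PowerIntegrals

section TruncatedOperators

variable {Ω : Set (Euc N)} {g : Euc N → Euc N → ℝ} {j : Euc N → Euc N → Euc N} {w : Euc N → ℝ}
  {x : Euc N} {ξ σ Cμ Cj L M : ℝ}

lemma Iin_neg : Iin Ω j g ξ (fun a => -w a) x = -Iin Ω j g ξ w x := by
  simp only [Iin, ← integral_neg]
  congr! 2 with z
  ring

lemma abs_Iin_le (hξ : 0 < ξ) (hσ : σ < 1) (hCμ : 0 ≤ Cμ) (hCj : 0 ≤ Cj) (hL : 0 ≤ L)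
    (hg : ∀ z, |g x z| ≤ Cμ * ‖z‖ ^ (-((N : ℝ) + σ))) (hj : ∀ z, ‖j x z‖ ≤ Cj * ‖z‖)
    (hw : ∀ a ∈ closure Ω, |w a - w x| ≤ L * ‖a - x‖) :
    |Iin Ω j g ξ w x| ≤
      L * Cj * Cμ * (∫ z in ball (0 : Euc N) 1, ‖z‖ ^ (1 + -((N : ℝ) + σ))) * ξ ^ (1 - σ) := by
  have hint : IntegrableOn (fun z : Euc N => ‖z‖ ^ (1 + -((N : ℝ) + σ))) (ball 0 ξ) :=
    integrableOn_ball_norm_rpow (by rw [finrank_euclideanSpace_fin]; linarith)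
  have hintegrand : ∀ z ∈ {z : Euc N | ‖z‖ < ξ ∧ x + j x z ∈ closure Ω},
      ‖(w (x + j x z) - w x) * g x z‖ ≤ L * Cj * Cμ * ‖z‖ ^ (1 + -((N : ℝ) + σ)) := by
    rintro z ⟨-, hz⟩
    have hincrement : |w (x + j x z) - w x| ≤ L * (Cj * ‖z‖) :=
      (hw _ hz).trans (by rw [add_sub_cancel_left]; gcongr; exact hj z)
    calc ‖(w (x + j x z) - w x) * g x z‖
        ≤ L * (Cj * ‖z‖) * (Cμ * ‖z‖ ^ (-((N : ℝ) + σ))) := by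
          rw [norm_mul]
          exact mul_le_mul hincrement (hg z) (abs_nonneg _) (by positivity)
      _ = L * Cj * Cμ * (‖z‖ ^ (1 : ℝ) * ‖z‖ ^ (-((N : ℝ) + σ))) := by
          rw [Real.rpow_one]
          ring
      _ ≤ L * Cj * Cμ * ‖z‖ ^ (1 + -((N : ℝ) + σ)) := by
          gcongr
          exact Real.le_rpow_add (norm_nonneg z) _ _
  calc |Iin Ω j g ξ w x|
      ≤ ∫ z in ball (0 : Euc N) ξ, L * Cj * Cμ * ‖z‖ ^ (1 + -((N : ℝ) + σ)) :=
        norm_setIntegral_le_setIntegral_of_norm_le (fun z hz => mem_ball_zero_iff.2 hz.1)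
          (hint.const_mul _) (fun z _ => by positivity) hintegrand
    _ = _ := by
        rw [integral_const_mul, setIntegral_ball_norm_rpow _ hξ, finrank_euclideanSpace_fin,
          show (N : ℝ) + (1 + -(N + σ)) = 1 - σ by ring]
        ring

lemma abs_Iout_le (hξ : 0 < ξ) (hσ : 0 < σ) (hx : x ∈ closure Ω)
    (hg : ∀ z, |g x z| ≤ Cμ * ‖z‖ ^ (-((N : ℝ) + σ))) (hw : ∀ a ∈ closure Ω, |w a| ≤ M) :
    |Iout Ω j g ξ w x| ≤
      2 * M * Cμ * (∫ z in (ball (0 : Euc N) 1)ᶜ, ‖z‖ ^ (-((N : ℝ) + σ))) * ξ ^ (-σ) := by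
  have hM : 0 ≤ M := (abs_nonneg _).trans (hw x hx)
  have hint : IntegrableOn (fun z : Euc N => ‖z‖ ^ (-((N : ℝ) + σ))) (ball 0 ξ)ᶜ :=
    integrableOn_compl_ball_norm_rpow hξ (by rw [finrank_euclideanSpace_fin]; linarith)
  have hintegrand : ∀ z ∈ {z : Euc N | ξ ≤ ‖z‖ ∧ x + j x z ∈ closure Ω},
      ‖(w (x + j x z) - w x) * g x z‖ ≤ 2 * M * (Cμ * ‖z‖ ^ (-((N : ℝ) + σ))) := by
    rintro z ⟨-, hz⟩
    have hincrement : |w (x + j x z) - w x| ≤ 2 * M :=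
      (abs_sub _ _).trans (by linarith [hw _ hz, hw x hx])
    rw [norm_mul]
    exact mul_le_mul hincrement (hg z) (abs_nonneg _) (by positivity)
  calc |Iout Ω j g ξ w x|
      ≤ ∫ z in (ball (0 : Euc N) ξ)ᶜ, 2 * M * (Cμ * ‖z‖ ^ (-((N : ℝ) + σ))) :=
        norm_setIntegral_le_setIntegral_of_norm_le (fun z hz => by simpa using hz.1)
          ((hint.const_mul _).const_mul _)
          (fun z _ => mul_nonneg (by positivity) ((abs_nonneg _).trans (hg z))) hintegrand
    _ = _ := by
        rw [integral_const_mul, integral_const_mul, setIntegral_compl_ball_norm_rpow _ hξ,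
          finrank_euclideanSpace_fin, show (N : ℝ) + -(N + σ) = -σ by ring]
        ring

end TruncatedOperators

section TestFunction

open scoped Gradient

variable {E : Type*} [NormedAddCommGroup E]

lemma lipschitzWith_of_norm_gradient_le {F : Type*} [NormedAddCommGroup F] [InnerProductSpace ℝ F]
    [CompleteSpace F] {f : F → ℝ} {M : ℝ} (hf : Differentiable ℝ f) (hM : ∀ x, ‖∇ f x‖ ≤ M) :
    LipschitzWith M.toNNReal f :=
  lipschitzWith_of_nnnorm_fderiv_le hf fun x => NNReal.le_toNNReal_of_coe_le <| by
    simpa only [gradient, LinearIsometryEquiv.norm_map, coe_nnnorm] using hM x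

/- `√(‖x‖ ^ 2 + c ^ 2)` is the Euclidean norm of the pair `(x, c)`. -/
lemma lipschitzWith_sqrt_norm_sq_add_sq (c : ℝ) :
    LipschitzWith 1 (fun x : E => √(‖x‖ ^ 2 + c ^ 2)) := by
  refine .of_dist_le_mul fun x y => ?_
  have hnorm (z : E) : √(‖z‖ ^ 2 + c ^ 2) = ‖WithLp.toLp 2 (z, c)‖ := by
    simp [WithLp.prod_norm_eq_of_L2]
  rw [hnorm, hnorm, NNReal.coe_one, one_mul]
  refine (dist_norm_norm_le _ _).trans_eq ?_
  rw [← WithLp.toLp_sub, Prod.mk_sub_mk, sub_self, WithLp.norm_toLp_fst, dist_eq_norm]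

variable [NormedSpace ℝ E]

/-- The test function `ψ(x, y) = φ((x + y) / 2) + ε⁻¹ χ_ε(|x - y|) + K ε⁻¹ |d(x) - d(y)|` of the
doubling of variables, with `χ_ε(r) = √(r² + ε⁴)` written out. -/
def doublingTest (φ d : E → ℝ) (K ε : ℝ) (x y : E) : ℝ :=
  φ ((2 : ℝ)⁻¹ • (x + y)) + ε⁻¹ * √(‖x - y‖ ^ 2 + ε ^ 4) + K * ε⁻¹ * |d x - d y|

lemma doublingTest_comm (φ d : E → ℝ) (K ε : ℝ) (x y : E) :
    doublingTest φ d K ε x y = doublingTest φ d K ε y x := by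
  simp only [doublingTest, add_comm x, norm_sub_rev x, abs_sub_comm (d x)]

lemma abs_doublingTest_sub_le {φ d : E → ℝ} {K ε : ℝ} {Lφ Ld : ℝ≥0} {s : Set E} {a x : E}
    (hφ : LipschitzWith Lφ φ) (hd : LipschitzOnWith Ld d s) (hε : ε ∈ Ioc 0 1)
    (ha : a ∈ s) (hx : x ∈ s) (y : E) :
    |doublingTest φ d K ε a y - doublingTest φ d K ε x y| ≤
      ε⁻¹ * (Lφ + 1 + |K| * Ld) * ‖a - x‖ := by
  have hε_inv : 1 ≤ ε⁻¹ := (one_le_inv₀ hε.1).2 hε.2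
  have hε_inv₀ : 0 ≤ ε⁻¹ := zero_le_one.trans hε_inv
  have hmidpoint :
      |φ ((2 : ℝ)⁻¹ • (a + y)) - φ ((2 : ℝ)⁻¹ • (x + y))| ≤ ε⁻¹ * (Lφ * ‖a - x‖) := by
    calc |φ ((2 : ℝ)⁻¹ • (a + y)) - φ ((2 : ℝ)⁻¹ • (x + y))|
        ≤ Lφ * ‖(2 : ℝ)⁻¹ • (a + y) - (2 : ℝ)⁻¹ • (x + y)‖ := hφ.norm_sub_le _ _
      _ = Lφ * (2⁻¹ * ‖a - x‖) := by
          rw [← smul_sub, add_sub_add_right_eq_sub, norm_smul, norm_inv, Real.norm_ofNat]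
      _ ≤ ε⁻¹ * (Lφ * ‖a - x‖) := by
          rw [mul_left_comm]
          exact mul_le_mul_of_nonneg_right (by linarith) (by positivity)
  have hχ : |√(‖a - y‖ ^ 2 + ε ^ 4) - √(‖x - y‖ ^ 2 + ε ^ 4)| ≤ ‖a - x‖ := by
    have hε_four : ε ^ 4 = (ε ^ 2) ^ 2 := by ring
    rw [hε_four]
    simpa using (lipschitzWith_sqrt_norm_sq_add_sq (ε ^ 2)).norm_sub_le (a - y) (x - y)
  have hdist : |(|d a - d y| - |d x - d y|)| ≤ Ld * ‖a - x‖ :=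
    (abs_abs_sub_abs_le_abs_sub _ _).trans <| by
      simpa only [sub_sub_sub_cancel_right, Real.norm_eq_abs] using hd.norm_sub_le ha hx
  calc |doublingTest φ d K ε a y - doublingTest φ d K ε x y|
      = |(φ ((2 : ℝ)⁻¹ • (a + y)) - φ ((2 : ℝ)⁻¹ • (x + y)))
          + ε⁻¹ * (√(‖a - y‖ ^ 2 + ε ^ 4) - √(‖x - y‖ ^ 2 + ε ^ 4))
          + K * ε⁻¹ * (|d a - d y| - |d x - d y|)| := by
        simp only [doublingTest]
        congr 1
        ring
    _ ≤ ε⁻¹ * (Lφ * ‖a - x‖) + ε⁻¹ * ‖a - x‖ + |K| * ε⁻¹ * (Ld * ‖a - x‖) := by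
        refine (abs_add_three _ _ _).trans ?_
        rw [abs_mul, abs_mul, abs_mul K, abs_of_nonneg hε_inv₀]
        gcongr
    _ = ε⁻¹ * (Lφ + 1 + |K| * Ld) * ‖a - x‖ := by ring

end TestFunction

theorem truncated_nonlocal_estimates_general {Ω : Set (Euc N)} {g : Euc N → Euc N → ℝ} {Cμ σ : ℝ}
    (hM1 : AssumptionM1 Ω g Cμ σ) {j : Euc N → Euc N → Euc N} {Cj : ℝ} (hCj : 0 ≤ Cj)
    (hj : ∀ x ∈ closure Ω, ∀ z, ‖j x z‖ ≤ Cj * ‖z‖) (K : ℝ) {φ d : Euc N → ℝ} {Lφ Ld : ℝ≥0}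
    (hφ : LipschitzWith Lφ φ) (hd : LipschitzOnWith Ld d (closure Ω)) {u v : Euc N → ℝ}
    (hu : BddOn u (closure Ω)) (hv : BddOn v (closure Ω)) :
    ∃ C₁ > (0 : ℝ), ∀ ξ > (0 : ℝ), ∀ ε ∈ Ioc (0 : ℝ) 1, ∀ x ∈ closure Ω, ∀ y ∈ closure Ω,
      (-(ε⁻¹ * C₁ * ξ ^ (1 - σ)) - C₁ * ξ ^ (-σ) ≤
        -Iin Ω j g ξ (fun a => doublingTest φ d K ε a y) x - Iout Ω j g ξ u x) ∧
      (-Iin Ω j g ξ (fun c => -doublingTest φ d K ε x c) y - Iout Ω j g ξ v y ≤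
        ε⁻¹ * C₁ * ξ ^ (1 - σ) + C₁ * ξ ^ (-σ)) := by
  obtain ⟨hCμ, hσ, -, hg_nonneg, hg_le⟩ := hM1
  obtain ⟨Mu, hMu⟩ := hu
  obtain ⟨Mv, hMv⟩ := hv
  have hg : ∀ x ∈ closure Ω, ∀ z, |g x z| ≤ Cμ * ‖z‖ ^ (-((N : ℝ) + σ)) := fun x hx z => by
    rw [abs_of_nonneg (hg_nonneg x hx z)]
    exact hg_le x hx z
  let Cin := (Lφ + 1 + |K| * Ld) * Cj * Cμ * ∫ z in ball (0 : Euc N) 1, ‖z‖ ^ (1 + -((N : ℝ) + σ))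
  let Cout := 2 * max Mu Mv * Cμ * ∫ z in (ball (0 : Euc N) 1)ᶜ, ‖z‖ ^ (-((N : ℝ) + σ))
  let C₁ := max 1 (max Cin Cout)
  have hCin : Cin ≤ C₁ := (le_max_left _ _).trans (le_max_right _ _)
  have hCout : Cout ≤ C₁ := (le_max_right _ _).trans (le_max_right _ _)
  refine ⟨C₁, lt_max_of_lt_left one_pos, fun ξ hξ ε hε x hx y hy => ?_⟩
  have hinner : ∀ a ∈ closure Ω, ∀ b,
      |Iin Ω j g ξ (fun c => doublingTest φ d K ε c b) a| ≤ ε⁻¹ * C₁ * ξ ^ (1 - σ) := by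
    intro a ha b
    have hε_inv : 0 ≤ ε⁻¹ := inv_nonneg.2 hε.1.le
    calc _ ≤ ε⁻¹ * (Lφ + 1 + |K| * Ld) * Cj * Cμ * _ * ξ ^ (1 - σ) :=
          abs_Iin_le hξ hσ.2 hCμ.le hCj (by positivity) (hg a ha) (hj a ha)
            fun c hc => abs_doublingTest_sub_le hφ hd hε hc ha b
      _ = ε⁻¹ * Cin * ξ ^ (1 - σ) := by ring
      _ ≤ ε⁻¹ * C₁ * ξ ^ (1 - σ) := by gcongr
  have houter : ∀ {w : Euc N → ℝ}, (∀ a ∈ closure Ω, |w a| ≤ max Mu Mv) → ∀ a ∈ closure Ω,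
      |Iout Ω j g ξ w a| ≤ C₁ * ξ ^ (-σ) := fun hw a ha =>
    (abs_Iout_le hξ hσ.1 ha (hg a ha) hw).trans (by gcongr)
  have hu_outer := houter (fun a ha => (hMu a ha).trans (le_max_left _ _)) x hx
  have hv_outer := houter (fun a ha => (hMv a ha).trans (le_max_right _ _)) y hy
  constructor
  · linarith [(abs_le.1 (hinner x hx y)).2, (abs_le.1 hu_outer).2]
  · simp only [Iin_neg, doublingTest_comm φ d K ε x]
    linarith [(abs_le.1 (hinner y hy x)).2, (abs_le.1 hv_outer).1]

/-- **Estimate of the truncated nonlocal terms (Lemma `estnonloclem`).**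
With the density bound (first part of (M)) and (J1), for the nonsmooth test function
`ψ(x,y) = φ((x+y)/2) + ε⁻¹ χ_ε(|x-y|) + K ε⁻¹ |d(x) - d(y)|`
(with `χ_ε(r) = √(r² + ε⁴)`), every `ξ > 0` admits a constant `C₁ > 0`, independent of
`ε ∈ (0,1)`, such that for all `x, y ∈ closure Ω`:
(i)  `-I_ξ[ψ(·,y)](x) - I^ξ[u](x) ≥ -ε⁻¹ C₁ ξ^{1-σ} - C₁ ξ^{-σ}`, and
(ii) `-I_ξ[-ψ(x,·)](y) - I^ξ[v](y) ≤ ε⁻¹ C₁ ξ^{1-σ} + C₁ ξ^{-σ}`. -/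
theorem truncated_nonlocal_estimates
    (Ω : Set (Euc N)) (hΩ : IsOpen Ω)
    (g : Euc N → Euc N → ℝ) (Cμ σ : ℝ) (hM1 : AssumptionM1 Ω g Cμ σ)
    (j : Euc N → Euc N → Euc N) (Cj' Cj Dj : ℝ) (hJ1 : AssumptionJ1 Ω j Cj' Cj Dj)
    (K : ℝ) (hK : 0 < K)
    (φ : Euc N → ℝ) (hφ : ContDiff ℝ 1 φ) (hφ' : ∃ M, ∀ x, ‖gradient φ x‖ ≤ M)
    (d : Euc N → ℝ) (hdb : ∃ M, ∀ x ∈ closure Ω, |d x| ≤ M)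
    (hdlip : ∃ L : ℝ≥0, LipschitzOnWith L d (closure Ω))
    (hdsd : ∃ U : Set (Euc N), IsOpen U ∧ frontier Ω ⊆ U ∧
      ∀ x ∈ U ∩ closure Ω, d x = sdist Ω x)
    (u v : Euc N → ℝ)
    (hub : BddOn u (closure Ω)) (husc : UpperSemicontinuousOn u (closure Ω))
    (hvb : BddOn v (closure Ω)) (hlsc : LowerSemicontinuousOn v (closure Ω)) :
    ∀ ξ > (0:ℝ), ∃ C₁ > (0:ℝ), ∀ ε ∈ Ioo (0:ℝ) 1, ∀ x ∈ closure Ω, ∀ y ∈ closure Ω,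
      (-(ε⁻¹ * C₁ * ξ ^ (1 - σ)) - C₁ * ξ ^ (-σ) ≤
        -Iin Ω j g ξ (fun a => φ ((2:ℝ)⁻¹ • (a + y)) +
            ε⁻¹ * Real.sqrt (‖a - y‖ ^ 2 + ε ^ 4) + K * ε⁻¹ * |d a - d y|) x
          - Iout Ω j g ξ u x) ∧
      (-Iin Ω j g ξ (fun c => -(φ ((2:ℝ)⁻¹ • (x + c)) +
            ε⁻¹ * Real.sqrt (‖x - c‖ ^ 2 + ε ^ 4) + K * ε⁻¹ * |d x - d c|)) y
          - Iout Ω j g ξ v y ≤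
        ε⁻¹ * C₁ * ξ ^ (1 - σ) + C₁ * ξ ^ (-σ)) := by
  intro ξ hξ
  obtain ⟨M, hM⟩ := hφ'
  obtain ⟨L, hL⟩ := hdlip
  obtain ⟨C₁, hC₁, hest⟩ := truncated_nonlocal_estimates_general hM1 hJ1.2.1.le
    (fun x hx z => (hJ1.2.2.2.1 x hx z).2) K
    (lipschitzWith_of_norm_gradient_le (hφ.differentiable one_ne_zero) hM) hL hub hvb
  exact ⟨C₁, hC₁, fun ε hε => hest ξ hξ ε (Ioo_subset_Ioc_self hε)⟩

end Censored

end
end
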